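/- arXiv:0901.4858 — 2 statements merged into one kernel-verified Lean document; each statement's English description precedes it below -/
import Mathlib

section
/- Every rayless graph admits an unfriendly partition. -/
open Cardinal

/-- A vertex `x` is happy in the two-colouring `π` of `G` if it has at least as many
neighbours in the opposite class as in its own class (as cardinals). -/
def Happy {V : Type*} (G : SimpleGraph V) (π : V → Bool) (x : V) : Prop :=
  #{y : V | G.Adj x y ∧ π y = π x} ≤ #{y : V | G.Adj x y ∧ π y ≠ π x}

/-- A two-colouring is unfriendly if every vertex is happy in it. -/
def Unfriendly {V : Type*} (G : SimpleGraph V) (π : V → Bool) : Prop :=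
  ∀ x : V, Happy G π x

/-- `G` contains a ray: a one-way infinite path. -/
def HasRay {V : Type*} (G : SimpleGraph V) : Prop :=
  ∃ r : ℕ → V, Function.Injective r ∧ ∀ n : ℕ, G.Adj (r n) (r (n + 1))

open Set

universe u

variable {V : Type u} {G : SimpleGraph V} {π π' : V → Bool} {F F' S T W D : Set V} {u x : V}

section Happy

/-- The neighbours of `x` in the colour class opposite to that of `x`. -/
def opponents (G : SimpleGraph V) (π : V → Bool) (x : V) : Set V :=
  {y | G.Adj x y ∧ π y ≠ π x}

lemma happy_iff_of_infinite (hx : (G.neighborSet x).Infinite) :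
    Happy G π x ↔ #(G.neighborSet x) ≤ #(opponents G π x) := by
  refine ⟨fun h => ?_, fun h => (mk_le_mk_of_subset fun y hy => hy.1).trans h⟩
  have hsplit : G.neighborSet x ⊆ {y | G.Adj x y ∧ π y = π x} ∪ opponents G π x :=
    fun y hy => (em (π y = π x)).imp (⟨hy, ·⟩) (⟨hy, ·⟩)
  have hcard := (mk_le_mk_of_subset hsplit).trans (mk_union_le _ _)
  contrapose! hcard
  exact add_lt_of_lt (infinite_coe_iff.2 hx |> aleph0_le_mk_iff.2) (h.trans_lt hcard) hcard

lemma Happy.of_mk_ne_lt (h : Happy G π x) (hx : (G.neighborSet x).Infinite) (heq : π' x = π x)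
    (hlt : #{y | G.Adj x y ∧ π' y ≠ π y} < #(G.neighborSet x)) : Happy G π' x := by
  rw [happy_iff_of_infinite hx] at h ⊢
  have hsub : opponents G π x ⊆ opponents G π' x ∪ {y | G.Adj x y ∧ π' y ≠ π y} := by
    rintro y ⟨hadj, hne⟩
    by_cases hy : π' y = π y
    · exact .inl ⟨hadj, by rwa [hy, heq]⟩
    · exact .inr ⟨hadj, hy⟩
  have hcard := h.trans <| (mk_le_mk_of_subset hsub).trans (mk_union_le _ _)
  contrapose! hcard
  exact add_lt_of_lt (infinite_coe_iff.2 hx |> aleph0_le_mk_iff.2) hcard hlt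

lemma Happy.of_finite_ne (h : Happy G π x) (hx : (G.neighborSet x).Infinite) (heq : π' x = π x)
    (hfin : {y | G.Adj x y ∧ π' y ≠ π y}.Finite) : Happy G π' x :=
  h.of_mk_ne_lt hx heq <| (lt_aleph0_iff_set_finite.2 hfin).trans_le <|
    aleph0_le_mk_iff.2 (infinite_coe_iff.2 hx)

end Happy

section Flip

open scoped Classical in
/-- The colouring obtained from `π` by switching the colours of the vertices in `T`. -/
noncomputable def flipOn (π : V → Bool) (T : Set V) (x : V) : Bool :=
  if x ∈ T then !π x else π x

lemma flipOn_of_mem (h : x ∈ T) : flipOn π T x = !π x := if_pos h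

lemma flipOn_of_notMem (h : x ∉ T) : flipOn π T x = π x := if_neg h

lemma flipOn_flipOn (π : V → Bool) (S T : Set V) :
    flipOn (flipOn π S) T = flipOn π (symmDiff S T) := by
  ext x
  by_cases hS : x ∈ S <;> by_cases hT : x ∈ T <;> simp [flipOn, mem_symmDiff, hS, hT]

lemma finite_flipOn_ne (hT : T.Finite) (p : V → Prop) : {y | p y ∧ flipOn π T y ≠ π y}.Finite :=
  hT.subset fun _ hy => of_not_not fun h => hy.2 (flipOn_of_notMem h)

lemma Happy.flipOn_of_finite (h : Happy G π x) (hx : (G.neighborSet x).Infinite)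
    (hT : T.Finite) (hxT : x ∉ T) : Happy G (flipOn π T) x :=
  h.of_finite_ne hx (flipOn_of_notMem hxT) (finite_flipOn_ne hT _)

lemma happy_flipOn_singleton (h : ¬ Happy G π x) : Happy G (flipOn π {x}) x := by
  have hx : flipOn π {x} x = !π x := flipOn_of_mem rfl
  have hne {y} (hy : G.Adj x y) : flipOn π {x} y = π y := flipOn_of_notMem hy.ne'
  have hsame : {y | G.Adj x y ∧ flipOn π {x} y = flipOn π {x} x} =
      {y | G.Adj x y ∧ π y ≠ π x} := by
    ext y; exact and_congr_right fun hy => by rw [hx, hne hy]; exact Bool.eq_not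
  have hopp : {y | G.Adj x y ∧ flipOn π {x} y ≠ flipOn π {x} x} =
      {y | G.Adj x y ∧ π y = π x} := by
    ext y; exact and_congr_right fun hy => by simp [hx, hne hy]
  rw [Happy, hsame, hopp]
  exact (not_le.1 h).le

/-- The indicator of the event that the pair `e` is monochromatic in the colouring `π`. -/
def monoIndicator (π : V → Bool) (e : Sym2 V) : ℤ :=
  if (e.map π).IsDiag then 1 else 0

lemma monoIndicator_mk (π : V → Bool) (x y : V) :
    monoIndicator π s(x, y) = if π x = π y then 1 else 0 := by
  simp [monoIndicator]

lemma monoIndicator_congr {e : Sym2 V} (h : ∀ x ∈ e, π x = π' x) :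
    monoIndicator π e = monoIndicator π' e := by
  rw [monoIndicator, Sym2.map_congr h, monoIndicator]

/-- The contribution of the pair `e` to the change in the number of monochromatic edges
when the vertices in `T` switch colours. -/
noncomputable def edgeCost (π : V → Bool) (T : Set V) (e : Sym2 V) : ℤ :=
  monoIndicator (flipOn π T) e - monoIndicator π e

lemma edgeCost_eq_zero {e : Sym2 V} (h : ∀ x ∈ e, x ∉ T) : edgeCost π T e = 0 :=
  sub_eq_zero.2 <| monoIndicator_congr fun x hx => flipOn_of_notMem (h x hx)

lemma edgeCost_congr {e : Sym2 V} (h : ∀ x ∈ e, π x = π' x) :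
    edgeCost π T e = edgeCost π' T e := by
  rw [edgeCost, edgeCost, monoIndicator_congr h,
    monoIndicator_congr fun x hx => show flipOn π T x = flipOn π' T x by simp [flipOn, h x hx]]

lemma edgeCost_mk_of_mem_of_notMem {x y : V} (hx : x ∈ T) (hy : y ∉ T) :
    edgeCost π T s(x, y) = if π y = π x then -1 else 1 := by
  simp only [edgeCost, monoIndicator_mk, flipOn_of_mem hx, flipOn_of_notMem hy]
  cases π x <;> cases π y <;> rfl

/-- The change in the number of monochromatic edges when the vertices in `T` switch colours;
a junk value unless only finitely many edges meet `T`. -/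
noncomputable def flipCost (G : SimpleGraph V) (π : V → Bool) (T : Set V) : ℤ :=
  ∑ᶠ e ∈ G.edgeSet, edgeCost π T e

/-- A finite set of vertices of finite degree in `F`: the sets whose `flipCost` is meaningful and
which are switched to make the vertices of finite degree in `F` happy. -/
structure Flippable (G : SimpleGraph V) (F T : Set V) : Prop where
  finite : T.Finite
  subset : T ⊆ F
  finite_neighborSet : ∀ x ∈ T, (G.neighborSet x).Finite

lemma Flippable.empty : Flippable G F ∅ := ⟨finite_empty, empty_subset F, by simp⟩

lemma Flippable.anti (hT : Flippable G F T) (hST : S ⊆ T) (hS : S ⊆ F') : Flippable G F' S :=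
  ⟨hT.finite.subset hST, hS, fun x hx => hT.finite_neighborSet x (hST hx)⟩

lemma Flippable.of_insert (hT : Flippable G (insert u F) T) (hu : (G.neighborSet u).Infinite) :
    Flippable G F T :=
  hT.anti subset_rfl fun x hx =>
    (hT.subset hx).resolve_left fun hxu => hu (hxu ▸ hT.finite_neighborSet x hx)

lemma flippable_singleton (hx : x ∈ F) (hfin : (G.neighborSet x).Finite) : Flippable G F {x} :=
  ⟨finite_singleton x, singleton_subset_iff.2 hx, by simpa⟩

lemma Flippable.symmDiff (hS : Flippable G F S) (hT : Flippable G F T) :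
    Flippable G F (symmDiff S T) where
  finite := hS.finite.symmDiff hT.finite
  subset := symmDiff_subset_union.trans (union_subset hS.subset hT.subset)
  finite_neighborSet x hx :=
    (symmDiff_subset_union hx).elim (hS.finite_neighborSet x) (hT.finite_neighborSet x)

lemma finite_incidenceSet_iff : (G.incidenceSet x).Finite ↔ (G.neighborSet x).Finite := by
  classical exact (G.incidenceSetEquivNeighborSet x).finite_iff

lemma Flippable.finite_support (hT : Flippable G F T) :
    (G.edgeSet ∩ Function.support (edgeCost π T)).Finite := by
  refine (hT.finite.biUnion fun x hx => finite_incidenceSet_iff.2 <|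
    hT.finite_neighborSet x hx).subset ?_
  rintro e ⟨he, hne⟩
  by_contra hmem
  exact hne <| edgeCost_eq_zero fun x hx hxT => hmem <| mem_biUnion hxT ⟨he, hx⟩

lemma flipCost_empty : flipCost G π ∅ = 0 :=
  finsum_mem_eq_zero_of_forall_eq_zero fun _ _ => edgeCost_eq_zero fun _ _ => notMem_empty _

lemma flipCost_symmDiff (hS : Flippable G F S) (hT : Flippable G F' T) :
    flipCost G π (symmDiff S T) = flipCost G π S + flipCost G (flipOn π S) T := by
  rw [flipCost, flipCost, flipCost, ← finsum_mem_add_distrib' hS.finite_support hT.finite_support]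
  exact finsum_mem_congr rfl fun e _ => by simp only [edgeCost, flipOn_flipOn]; ring

lemma flipCost_congr (h : ∀ x ∈ T, π x = π' x ∧ ∀ y, G.Adj x y → π y = π' y) :
    flipCost G π T = flipCost G π' T := by
  refine finsum_mem_congr rfl fun e he => ?_
  by_cases hT : ∃ x ∈ e, x ∈ T
  · obtain ⟨x, hxe, hxT⟩ := hT
    obtain ⟨y, rfl⟩ := Sym2.mem_iff_exists.1 hxe
    refine edgeCost_congr fun z hz => ?_
    rcases Sym2.mem_iff.1 hz with rfl | rfl
    exacts [(h z hxT).1, (h x hxT).2 z he]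
  · push Not at hT
    rw [edgeCost_eq_zero hT, edgeCost_eq_zero hT]

lemma flipCost_union (hS : Flippable G F S) (hT : Flippable G F' T) (hdisj : Disjoint S T)
    (hadj : ∀ x ∈ S, ∀ y ∈ T, ¬ G.Adj x y) :
    flipCost G π (S ∪ T) = flipCost G π S + flipCost G π T := by
  rw [show S ∪ T = S ⊔ T from rfl, ← hdisj.symmDiff_eq_sup, flipCost_symmDiff hS hT]
  congr 1
  exact flipCost_congr fun x hx => ⟨flipOn_of_notMem (hdisj.notMem_of_mem_right hx),
    fun y hy => flipOn_of_notMem fun hyS => hadj y hyS x hx hy.symm⟩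

lemma finsum_mem_edgeSet_eq_finsum_mem_neighborSet {M : Type*} [AddCommMonoid M]
    {f : Sym2 V → M} (hf : ∀ e, x ∉ e → f e = 0) :
    ∑ᶠ e ∈ G.edgeSet, f e = ∑ᶠ y ∈ G.neighborSet x, f s(x, y) := by
  have hinj : InjOn (fun y => s(x, y)) (G.neighborSet x) := fun _ _ _ _ h => Sym2.congr_right.1 h
  have himage : (fun y => s(x, y)) '' G.neighborSet x = G.incidenceSet x := by
    ext e
    constructor
    · rintro ⟨y, hy, rfl⟩
      exact ⟨hy, Sym2.mem_mk_left x y⟩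
    · rintro ⟨he, hx⟩
      obtain ⟨y, rfl⟩ := Sym2.mem_iff_exists.1 hx
      exact ⟨y, he, rfl⟩
  rw [← finsum_mem_image (f := f) hinj, himage]
  exact finsum_mem_inter_support_eq' _ _ _ fun e he =>
    ⟨fun hG => ⟨hG, not_imp_comm.1 (hf e) he⟩, And.left⟩

lemma flipCost_singleton (G : SimpleGraph V) (π : V → Bool) (x : V) :
    flipCost G π {x} = ∑ᶠ y ∈ G.neighborSet x, if π y = π x then -1 else 1 := by
  rw [flipCost, finsum_mem_edgeSet_eq_finsum_mem_neighborSet (x := x)]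
  · exact finsum_mem_congr rfl fun y hy => edgeCost_mk_of_mem_of_notMem rfl hy.ne'
  · exact fun e hx => edgeCost_eq_zero fun y hy hyx => hx (mem_singleton_iff.1 hyx ▸ hy)

lemma happy_of_flipCost_singleton_nonneg (hfin : (G.neighborSet x).Finite)
    (h : 0 ≤ flipCost G π {x}) : Happy G π x := by
  let N := hfin.toFinset
  have hsame : {y | G.Adj x y ∧ π y = π x} = ({y ∈ N | π y = π x} : Finset V) := by ext; simp [N]
  have hopp : {y | G.Adj x y ∧ π y ≠ π x} = ({y ∈ N | π y ≠ π x} : Finset V) := by ext; simp [N]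
  have hcost : flipCost G π {x} =
      ({y ∈ N | π y ≠ π x}.card : ℤ) - ({y ∈ N | π y = π x}.card : ℤ) := by
    rw [flipCost_singleton, finsum_mem_eq_finite_toFinset_sum _ hfin, Finset.sum_ite]
    simp only [Finset.sum_const, smul_neg, nsmul_one, N]
    ring
  rw [Happy, hsame, hopp]
  simp only [Finset.coe_sort_coe, mk_coe_finset, Nat.cast_le]
  lia

lemma edgeCost_flipOn_singleton {e : Sym2 V} (h : u ∉ e) :
    edgeCost (flipOn π {u}) T e = edgeCost π T e :=
  edgeCost_congr fun _ hx => flipOn_of_notMem fun hxu => h (mem_singleton_iff.1 hxu ▸ hx)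

lemma edgeCost_mk_sub_edgeCost_flipOn_singleton {y : V} (hu : u ∉ T) (hy : y ∈ T) :
    edgeCost π T s(u, y) - edgeCost (flipOn π {u}) T s(u, y) = if π y = π u then -2 else 2 := by
  have hyu : y ∉ ({u} : Set V) := fun h => hu (mem_singleton_iff.1 h ▸ hy)
  rw [Sym2.eq_swap, edgeCost_mk_of_mem_of_notMem hy hu, edgeCost_mk_of_mem_of_notMem hy hu,
    flipOn_of_mem (mem_singleton u), flipOn_of_notMem hyu]
  cases π u <;> cases π y <;> rfl

lemma flipCost_sub_flipCost_flipOn_singleton (hT : Flippable G F T) (hu : u ∉ T) :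
    flipCost G π T - flipCost G (flipOn π {u}) T =
      ∑ᶠ y ∈ G.neighborSet u ∩ T, if π y = π u then -2 else 2 := by
  have hsub : flipCost G π T - flipCost G (flipOn π {u}) T =
      ∑ᶠ e ∈ G.edgeSet, (edgeCost π T e - edgeCost (flipOn π {u}) T e) := by
    rw [sub_eq_iff_eq_add, flipCost, flipCost, ← finsum_mem_add_distrib' _ hT.finite_support]
    · simp only [sub_add_cancel]
    · refine ((hT.finite_support (π := π)).union
        (hT.finite_support (π := flipOn π {u}))).subset ?_
      rw [← inter_union_distrib_left]
      exact inter_subset_inter_right _ (Function.support_sub _ _)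
  rw [hsub, finsum_mem_edgeSet_eq_finsum_mem_neighborSet (x := u)
    fun e he => by rw [edgeCost_flipOn_singleton he, sub_self]]
  calc _ = ∑ᶠ y ∈ G.neighborSet u ∩ T,
        (edgeCost π T s(u, y) - edgeCost (flipOn π {u}) T s(u, y)) := by
        refine finsum_mem_inter_support_eq' _ _ _ fun y hy => ⟨fun hG => ⟨hG, ?_⟩, And.left⟩
        by_contra hyT
        have hmem : ∀ z ∈ s(u, y), z ∉ T := by simp [hu, hyT]
        exact hy (by simp [edgeCost_eq_zero hmem])
    _ = _ := finsum_mem_congr rfl fun y hy => edgeCost_mk_sub_edgeCost_flipOn_singleton hu hy.2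

lemma flipCost_le_flipCost_flipOn_singleton (hT : Flippable G F T) (hu : u ∉ T) :
    flipCost G π T ≤ flipCost G (flipOn π {u}) T + 2 * (T ∩ opponents G π u).ncard := by
  have hfin : (G.neighborSet u ∩ T).Finite := hT.finite.subset inter_subset_right
  have hopp : T ∩ opponents G π u = ({y ∈ hfin.toFinset | π y ≠ π u} : Finset V) := by
    ext y
    simp only [opponents, Finset.coe_filter, Finite.mem_toFinset, mem_inter_iff,
      SimpleGraph.mem_neighborSet, mem_ofPred_eq]
    tauto
  rw [← sub_le_iff_le_add', flipCost_sub_flipCost_flipOn_singleton hT hu,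
    finsum_mem_eq_finite_toFinset_sum _ hfin, hopp, ncard_coe_finset, Finset.sum_ite]
  simp only [Finset.sum_const, smul_neg, nsmul_eq_mul]
  lia

end Flip

section Optimal

/-- The colouring `π` is stable on `F` if switching finitely many vertices of finite degree in `F`
never decreases the number of monochromatic edges. -/
def Stable (G : SimpleGraph V) (F : Set V) (π : V → Bool) : Prop :=
  ∀ ⦃T⦄, Flippable G F T → 0 ≤ flipCost G π T

lemma Stable.of_finite_imp_mem (h : Stable G F' π)
    (hF : ∀ x ∈ F, (G.neighborSet x).Finite → x ∈ F') : Stable G F π :=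
  fun _ hT => h <| hT.anti subset_rfl fun x hx => hF x (hT.subset hx) (hT.finite_neighborSet x hx)

lemma Stable.insert_of_infinite (h : Stable G F π) (hu : (G.neighborSet u).Infinite) :
    Stable G (insert u F) π :=
  fun _ hT => h (hT.of_insert hu)

lemma Stable.flipOn_singleton (h : Stable G F π) (hu : u ∉ F)
    (hdisj : Disjoint F (opponents G π u)) : Stable G F (flipOn π {u}) := by
  intro T hT
  have hle := flipCost_le_flipCost_flipOn_singleton (π := π) hT fun huT => hu (hT.subset huT)
  rw [(hdisj.mono_left hT.subset).inter_eq, ncard_empty] at hle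
  have := h hT
  lia

lemma exists_stable_flipOn (hbdd : BddBelow (flipCost G π '' {T | Flippable G F T})) :
    ∃ T, Flippable G F T ∧ Stable G F (flipOn π T) := by
  have hne : (flipCost G π '' {T | Flippable G F T}).Nonempty :=
    ⟨_, mem_image_of_mem _ Flippable.empty⟩
  obtain ⟨T, hT, hmin⟩ := Int.csInf_mem hne hbdd
  refine ⟨T, hT, fun S hS => ?_⟩
  have hle := csInf_le hbdd (mem_image_of_mem _ (hT.symmDiff hS))
  rw [← hmin, flipCost_symmDiff hT hS] at hle
  lia

lemma bddBelow_flipCost_flipOn_singleton (h : Stable G F π) (hu : u ∉ F)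
    (hfin : (opponents G π u).Finite) :
    BddBelow (flipCost G (flipOn π {u}) '' {T | Flippable G F T}) := by
  refine ⟨-(2 * (opponents G π u).ncard), forall_mem_image.2 fun T hT => ?_⟩
  have hle := flipCost_le_flipCost_flipOn_singleton (π := π) hT (fun huT => hu (hT.subset huT))
  have hcard := ncard_le_ncard (inter_subset_right (s := T)) hfin
  have := h hT
  lia

lemma bddBelow_flipCost_insert (h : Stable G F π) (hu : u ∉ F) (hfin : (G.neighborSet u).Finite) :
    BddBelow (flipCost G π '' {T | Flippable G (insert u F) T}) := by
  obtain ⟨b, hb⟩ := bddBelow_flipCost_flipOn_singleton h hu (hfin.subset fun y hy => hy.1)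
  refine ⟨min 0 (flipCost G π {u} + b), forall_mem_image.2 fun T hT => ?_⟩
  by_cases huT : u ∈ T
  · have hdiff : Flippable G F (T \ {u}) :=
      hT.anti sdiff_subset fun x hx => (hT.subset hx.1).resolve_left hx.2
    have hsymm : symmDiff {u} (T \ {u}) = T := by
      rw [disjoint_sdiff_self_right.symmDiff_eq_sup]
      exact union_sdiff_cancel (singleton_subset_iff.2 huT)
    rw [← hsymm, flipCost_symmDiff (flippable_singleton (mem_univ u) hfin) hdiff]
    exact (min_le_right _ _).trans (add_le_add_right (hb (mem_image_of_mem _ hdiff)) _)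
  · exact (min_le_left _ _).trans <| h <| hT.anti subset_rfl
      ((subset_insert_iff_of_notMem huT).1 hT.subset)

lemma Stable.of_closed (hW : Stable G W π') (hD : Stable G (D \ W) π) (heq : EqOn π' π Wᶜ)
    (hclosed : ∀ x ∈ W, ∀ y ∈ D, G.Adj x y → y ∈ W) : Stable G D π' := by
  intro T hT
  have hin : Flippable G W (T ∩ W) := hT.anti inter_subset_left inter_subset_right
  have hout : Flippable G (D \ W) (T \ W) :=
    hT.anti sdiff_subset (sdiff_subset_sdiff_left hT.subset)
  have hcongr : flipCost G π' (T \ W) = flipCost G π (T \ W) := flipCost_congr fun x hx =>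
    ⟨heq hx.2, fun y hy => heq fun hyW => hx.2 (hclosed y hyW x (hT.subset hx.1) hy.symm)⟩
  have hdisj : Disjoint (T ∩ W) (T \ W) := disjoint_sdiff_right.mono_left inter_subset_right
  have hsplit := flipCost_union (π := π') hin hout hdisj
    fun x hx y hy hxy => hy.2 (hclosed x hx.2 y (hT.subset hy.1) hxy)
  rw [← inter_union_sdiff T W, hsplit, hcongr]
  exact add_nonneg (hW hin) (hD hout)

lemma Stable.of_fibers {ι : Type*} {c : V → ι} {π : V → Bool}
    (hc : ∀ x ∈ F, ∀ y ∈ F, G.Adj x y → c x = c y) (h : ∀ i, Stable G (F ∩ c ⁻¹' {i}) π) :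
    Stable G F π := by
  intro T hT
  induction hn : T.ncard using Nat.strong_induction_on generalizing T with
  | _ n ih =>
  obtain rfl | ⟨x, hx⟩ := T.eq_empty_or_nonempty
  · exact flipCost_empty.ge
  let C := c ⁻¹' {c x}
  have hin : Flippable G (F ∩ C) (T ∩ C) :=
    hT.anti inter_subset_left (inter_subset_inter_left _ hT.subset)
  have hout : Flippable G F (T \ C) := hT.anti sdiff_subset (sdiff_subset.trans hT.subset)
  have hlt : (T \ C).ncard < n := by
    rw [← hn]
    exact ncard_lt_ncard (sdiff_ssubset_left_iff.2 ⟨x, hx, rfl⟩) hT.finite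
  rw [← inter_union_sdiff T C, flipCost_union hin hout
    (disjoint_sdiff_right.mono_left inter_subset_right) fun y hy z hz hyz =>
      hz.2 ((hc y (hT.subset hy.1) z (hT.subset hz.1) hyz).symm.trans hy.2)]
  exact add_nonneg (h _ hin) (ih _ hlt hout rfl)

lemma Stable.congr (h : Stable G F π)
    (heq : ∀ x ∈ F, π' x = π x ∧ ∀ y, G.Adj x y → π' y = π y) : Stable G F π' :=
  fun _ hT => (flipCost_congr fun x hx => heq x (hT.subset hx)) ▸ h hT

/-- The colouring `π` is optimal on `F` if it makes the vertices of infinite degree in `F` happy and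
is stable on `F`; stability strengthens happiness at the vertices of finite degree. This is the
invariant of the construction. -/
structure OptimalOn (G : SimpleGraph V) (F : Set V) (π : V → Bool) : Prop where
  happy_of_infinite : ∀ x ∈ F, (G.neighborSet x).Infinite → Happy G π x
  stable : Stable G F π

lemma OptimalOn.happy (h : OptimalOn G F π) (hx : x ∈ F) : Happy G π x := by
  by_cases hfin : (G.neighborSet x).Finite
  · exact happy_of_flipCost_singleton_nonneg hfin (h.stable (flippable_singleton hx hfin))
  · exact h.happy_of_infinite x hx hfin

lemma exists_optimalOn_of_bddBelow (h : ∀ x ∈ F, (G.neighborSet x).Infinite → Happy G π x)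
    (hbdd : BddBelow (flipCost G π '' {T | Flippable G F T})) :
    ∃ ρ, EqOn ρ π Fᶜ ∧ OptimalOn G F ρ := by
  obtain ⟨T, hT, hstable⟩ := exists_stable_flipOn hbdd
  exact ⟨flipOn π T, fun x hx => flipOn_of_notMem fun hxT => hx (hT.subset hxT),
    fun x hx hinf => (h x hx hinf).flipOn_of_finite hinf hT.finite
      fun hxT => hinf (hT.finite_neighborSet x hxT), hstable⟩

/-- Every colouring of the vertices outside `F` extends to a colouring that is optimal on `F`. -/
def Solvable (G : SimpleGraph V) (F : Set V) : Prop :=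
  ∀ σ : V → Bool, ∃ π, EqOn π σ Fᶜ ∧ OptimalOn G F π

end Optimal

section Solvable

lemma solvable_empty : Solvable G ∅ := fun σ =>
  ⟨σ, eqOn_refl σ _, fun _ hx => hx.elim, fun _ hT => by
    rw [subset_empty_iff.1 hT.subset, flipCost_empty]⟩

lemma Solvable.of_fibers {ι : Type*} {c : V → ι} (hc : ∀ x ∈ F, ∀ y ∈ F, G.Adj x y → c x = c y)
    (h : ∀ i, Solvable G (F ∩ c ⁻¹' {i})) : Solvable G F := by
  intro σ
  choose q hqσ hq using fun i => h i σ
  have hglue {x : V} (hx : x ∈ F) : ∀ y, G.Adj x y → q (c y) y = q (c x) y := by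
    intro y hxy
    by_cases hy : y ∈ F
    · rw [hc x hx y hy hxy]
    · rw [hqσ (c y) fun hyF => hy hyF.1, hqσ (c x) fun hyF => hy hyF.1]
  refine ⟨fun x => q (c x) x, fun x hx => hqσ (c x) fun hxF => hx hxF.1, fun x hx hinf => ?_,
    Stable.of_fibers hc fun i => ?_⟩
  · refine ((hq (c x)).happy_of_infinite x ⟨hx, rfl⟩ hinf).of_finite_ne hinf rfl ?_
    exact finite_empty.subset fun y hy => hy.2 (hglue hx y hy.1)
  · refine (hq i).stable.congr ?_
    rintro x ⟨hx, rfl⟩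
    exact ⟨rfl, hglue hx⟩

lemma Solvable.insert_of_finite (h : Solvable G F) (hu : (G.neighborSet u).Finite) :
    Solvable G (insert u F) := by
  by_cases huF : u ∈ F
  · rwa [insert_eq_of_mem huF]
  intro σ
  obtain ⟨π, hπσ, hπ⟩ := h σ
  have hhappy : ∀ x ∈ insert u F, (G.neighborSet x).Infinite → Happy G π x := by
    rintro x (rfl | hx) hinf
    exacts [absurd hu hinf, hπ.happy hx]
  obtain ⟨ρ, hρπ, hρ⟩ :=
    exists_optimalOn_of_bddBelow hhappy (bddBelow_flipCost_insert hπ.stable huF hu)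
  exact ⟨ρ, hρπ.trans (hπσ.mono (compl_subset_compl.2 (subset_insert u F))), hρ⟩

/-- All subsets of `F` are solvable. Unlike solvability itself, this passes from `F` to
`insert u F` also when `u` has infinite degree, where only a part of `F` is recoloured. -/
def HereditarilySolvable (G : SimpleGraph V) (F : Set V) : Prop :=
  ∀ ⦃W⦄, W ⊆ F → Solvable G W

lemma exists_closed_superset {A D : Set V} {κ : Cardinal.{u}} (hκ : ℵ₀ ≤ κ) (hAD : A ⊆ D)
    (hA : #A ≤ κ) (hD : ∀ x ∈ D, #(G.neighborSet x) ≤ κ) :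
    ∃ W, A ⊆ W ∧ W ⊆ D ∧ #W ≤ κ ∧ ∀ x ∈ W, ∀ y ∈ D, G.Adj x y → y ∈ W := by
  let next (B : Set V) : Set V := {y ∈ D | ∃ x ∈ B, G.Adj x y}
  have hsucc (n : ℕ) : next^[n + 1] A = next (next^[n] A) := Function.iterate_succ_apply' next n A
  have hsub (n : ℕ) : next^[n] A ⊆ D := by
    cases n with
    | zero => exact hAD
    | succ n => exact hsucc n ▸ sep_subset D _
  have hcard (n : ℕ) : #(next^[n] A) ≤ κ := by
    induction n with
    | zero => exact hA
    | succ n ih =>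
      have hnext : next (next^[n] A) ⊆ ⋃ x ∈ next^[n] A, G.neighborSet x :=
        fun y ⟨_, x, hx, hxy⟩ => mem_biUnion hx hxy
      rw [hsucc]
      calc #(next (next^[n] A)) ≤ #(next^[n] A) * ⨆ x : next^[n] A, #(G.neighborSet x) :=
            (mk_le_mk_of_subset hnext).trans (mk_biUnion_le _ _)
        _ ≤ κ * κ := mul_le_mul' ih (ciSup_le' fun x => hD x (hsub n x.2))
        _ = κ := mul_eq_self hκ
  refine ⟨⋃ n, next^[n] A, subset_iUnion (fun n => next^[n] A) 0, iUnion_subset hsub, ?_, ?_⟩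
  · have hle := mk_iUnion_le_lift fun n => next^[n] A
    simp only [lift_uzero, mk_nat, lift_aleph0] at hle
    exact hle.trans ((mul_le_mul' hκ (ciSup_le' hcard)).trans_eq (mul_eq_self hκ))
  · intro x hx y hy hxy
    obtain ⟨n, hn⟩ := mem_iUnion.1 hx
    exact mem_iUnion.2 ⟨n + 1, hsucc n ▸ ⟨hy, x, hn, hxy⟩⟩

lemma OptimalOn.insert_of_happy (h : OptimalOn G F π) (hinf : (G.neighborSet u).Infinite)
    (hu : Happy G π u) : OptimalOn G (insert u F) π where
  happy_of_infinite x hx hxinf := hx.elim (fun hxu => hxu ▸ hu) (h.happy_of_infinite x · hxinf)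
  stable := h.stable.insert_of_infinite hinf

lemma OptimalOn.exists_insert_of_finite_opponents (h : OptimalOn G F π) (huF : u ∉ F)
    (hinf : (G.neighborSet u).Infinite) (hu : ¬ Happy G π u) (hfin : (opponents G π u).Finite) :
    ∃ ρ, EqOn ρ π (insert u F)ᶜ ∧ OptimalOn G (insert u F) ρ := by
  have hhappy : ∀ x ∈ insert u F, (G.neighborSet x).Infinite → Happy G (flipOn π {u}) x := by
    rintro x (rfl | hx) hxinf
    · exact happy_flipOn_singleton hu
    · exact (h.happy hx).flipOn_of_finite hxinf (finite_singleton u)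
        fun hxu => huF (mem_singleton_iff.1 hxu ▸ hx)
  have hbdd : BddBelow (flipCost G (flipOn π {u}) '' {T | Flippable G (insert u F) T}) :=
    (bddBelow_flipCost_flipOn_singleton h.stable huF hfin).mono <|
      image_mono fun T hT => hT.of_insert hinf
  obtain ⟨ρ, hρ, hopt⟩ := exists_optimalOn_of_bddBelow hhappy hbdd
  exact ⟨ρ, fun x hx => (hρ hx).trans (flipOn_of_notMem fun hxu => hx (.inl hxu)), hopt⟩

-- Switching `u` alone destroys stability only through sets meeting the opponents of `u`, and the
-- opponents that may belong to a flippable set, being of finite degree, all lie in `W`.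
lemma Stable.exists_optimalOn_of_infinite_opponents (h : Stable G F π) (huF : u ∉ F)
    (hO : (opponents G π u).Infinite) (hsolv : HereditarilySolvable G F) :
    ∃ W ρ, W ⊆ F ∧ #W ≤ #(opponents G π u) ∧
      (∀ x ∈ W, ∀ y ∈ F, #(G.neighborSet y) ≤ #(opponents G π u) → G.Adj x y → y ∈ W) ∧
      EqOn ρ (flipOn π {u}) Wᶜ ∧ OptimalOn G W ρ ∧ Stable G F ρ := by
  set O := opponents G π u
  let D : Set V := {x ∈ F | #(G.neighborSet x) ≤ #O}
  have hO₀ : ℵ₀ ≤ #O := aleph0_le_mk_iff.2 (infinite_coe_iff.2 hO)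
  obtain ⟨W, hOW, hWD, hWO, hclosed⟩ := exists_closed_superset (G := G) hO₀
    (inter_subset_right (s := O) (t := D)) (mk_le_mk_of_subset inter_subset_left) fun x hx => hx.2
  have hWF : W ⊆ F := hWD.trans (sep_subset F _)
  obtain ⟨ρ, hρ, hopt⟩ := hsolv hWF (flipOn π {u})
  have hdisj : Disjoint (D \ W) O :=
    disjoint_left.2 fun x hx hxO => hx.2 (hOW ⟨hxO, hx.1⟩)
  have hout : Stable G (D \ W) (flipOn π {u}) :=
    (h.of_finite_imp_mem fun x hx _ => hx.1.1).flipOn_singleton (fun huD => huF huD.1.1) hdisj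
  have hstable : Stable G F ρ := (hopt.stable.of_closed hout hρ hclosed).of_finite_imp_mem
    fun x hx hfin => ⟨hx, (lt_aleph0_iff_set_finite.2 hfin).le.trans hO₀⟩
  exact ⟨W, ρ, hWF, hWO, fun x hx y hy hyO => hclosed x hx y ⟨hy, hyO⟩, hρ, hopt, hstable⟩

lemma OptimalOn.exists_insert_of_infinite_opponents (h : OptimalOn G F π) (huF : u ∉ F)
    (hinf : (G.neighborSet u).Infinite) (hu : ¬ Happy G π u) (hO : (opponents G π u).Infinite)
    (hsolv : HereditarilySolvable G F) :
    ∃ ρ, EqOn ρ π (insert u F)ᶜ ∧ OptimalOn G (insert u F) ρ := by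
  obtain ⟨W, ρ, hWF, hWO, hclosed, hρ, hopt, hstable⟩ :=
    h.stable.exists_optimalOn_of_infinite_opponents huF hO hsolv
  set O := opponents G π u
  have hO₀ : ℵ₀ ≤ #O := aleph0_le_mk_iff.2 (infinite_coe_iff.2 hO)
  have hOu : #O < #(G.neighborSet u) := not_le.1 fun hle => hu ((happy_iff_of_infinite hinf).2 hle)
  have hρne {x : V} (hx : ρ x ≠ π x) : x ∈ insert u W := by
    by_contra hxuW
    rw [mem_insert_iff, not_or] at hxuW
    exact hx ((hρ hxuW.2).trans (flipOn_of_notMem hxuW.1))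
  refine ⟨ρ, fun x hx => ?_, fun x hx hxinf => ?_, hstable.insert_of_infinite hinf⟩
  · exact not_imp_comm.1 hρne fun hxuW => hx (insert_subset_insert hWF hxuW)
  obtain rfl | hx := hx
  · refine (happy_flipOn_singleton hu).of_mk_ne_lt hinf (hρ fun hxW => huF (hWF hxW)) ?_
    exact (mk_le_mk_of_subset fun y hy => not_imp_comm.1 (@hρ y) hy.2).trans_lt
      (hWO.trans_lt hOu)
  by_cases hxW : x ∈ W
  · exact hopt.happy hxW
  have hρx : ρ x = π x := not_imp_comm.1 hρne <| not_or.2 ⟨fun hxu => huF (hxu ▸ hx), hxW⟩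
  by_cases hxD : #(G.neighborSet x) ≤ #O
  · refine (h.happy hx).of_finite_ne hxinf hρx <| (finite_singleton u).subset fun y hy => ?_
    exact (hρne hy.2).resolve_right fun hyW => hxW (hclosed y hyW x hx hxD hy.1.symm)
  · refine (h.happy hx).of_mk_ne_lt hxinf hρx ?_
    calc _ ≤ #(insert u W : Set V) := mk_le_mk_of_subset fun y hy => hρne hy.2
      _ ≤ #W + 1 := mk_insert_le
      _ ≤ #O := add_le_of_le hO₀ hWO (one_le_aleph0.trans hO₀)
      _ < #(G.neighborSet x) := not_le.1 hxD

lemma HereditarilySolvable.solvable_insert (h : HereditarilySolvable G F) :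
    Solvable G (insert u F) := by
  by_cases hfin : (G.neighborSet u).Finite
  · exact (h subset_rfl).insert_of_finite hfin
  by_cases huF : u ∈ F
  · rw [insert_eq_of_mem huF]
    exact h subset_rfl
  intro σ
  obtain ⟨π, hπσ, hπ⟩ := h subset_rfl σ
  have hmono : EqOn π σ (insert u F)ᶜ := hπσ.mono (compl_subset_compl.2 (subset_insert u F))
  by_cases hu : Happy G π u
  · exact ⟨π, hmono, hπ.insert_of_happy hfin hu⟩
  obtain ⟨ρ, hρπ, hρ⟩ : ∃ ρ, EqOn ρ π (insert u F)ᶜ ∧ OptimalOn G (insert u F) ρ := by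
    by_cases hO : (opponents G π u).Finite
    · exact hπ.exists_insert_of_finite_opponents huF hfin hu hO
    · exact hπ.exists_insert_of_infinite_opponents huF hfin hu hO h
  exact ⟨ρ, hρπ.trans hmono, hρ⟩

lemma HereditarilySolvable.insert (h : HereditarilySolvable G F) :
    HereditarilySolvable G (insert u F) := by
  intro W hW
  have hsub : W \ {u} ⊆ F := sdiff_singleton_subset_iff.2 hW
  by_cases hu : u ∈ W
  · rw [← insert_sdiff_self_of_mem hu]
    exact HereditarilySolvable.solvable_insert fun S hS => h (hS.trans hsub)
  · exact h (sdiff_singleton_eq_self hu ▸ hsub)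

lemma HereditarilySolvable.of_components
    (h : ∀ C : (G.induce F).ConnectedComponent, HereditarilySolvable G ((↑) '' C.supp)) :
    HereditarilySolvable G F := by
  classical
  intro W hW
  let c (x : V) : Option (G.induce F).ConnectedComponent :=
    if hx : x ∈ F then some ((G.induce F).connectedComponentMk ⟨x, hx⟩) else none
  have hc {x : V} (hx : x ∈ F) : c x = some ((G.induce F).connectedComponentMk ⟨x, hx⟩) :=
    dif_pos hx
  refine Solvable.of_fibers (c := c) (fun x hx y hy hxy => ?_) (Option.rec ?_ fun C => ?_)
  · rw [hc (hW hx), hc (hW hy), Option.some_inj, SimpleGraph.ConnectedComponent.eq]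
    exact SimpleGraph.Adj.reachable hxy
  · suffices hW₀ : W ∩ c ⁻¹' {none} = ∅ from hW₀ ▸ solvable_empty
    exact eq_empty_of_forall_notMem fun x hx =>
      Option.some_ne_none _ ((hc (hW hx.1)).symm.trans hx.2)
  · refine h C fun x hx => ⟨⟨x, hW hx.1⟩, ?_, rfl⟩
    exact Option.some_inj.1 ((hc (hW hx.1)).symm.trans hx.2)

end Solvable

section Rayless

lemma wellFounded_of_not_hasRay (hray : ¬ HasRay G) :
    WellFounded fun q p : Set V × V => q.2 ∈ q.1 ∧ q.1 ⊆ p.1 \ {p.2} ∧ G.Adj p.2 q.2 := by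
  rw [wellFounded_iff_isEmpty_descending_chain]
  refine ⟨fun ⟨f, hf⟩ => hray ⟨fun n => (f n).2,
    Function.Injective.of_lt_imp_ne fun m n hmn heq => ?_, fun n => (hf n).2.2⟩⟩
  have hanti : Antitone fun n => (f n).1 :=
    antitone_nat_of_succ_le fun n => (hf n).2.1.trans sdiff_subset
  obtain ⟨k, rfl⟩ := Nat.exists_eq_succ_of_ne_zero hmn.ne_bot
  exact ((hf m).2.1 (hanti (Nat.succ_le_of_lt hmn) (hf k).1)).2 heq.symm

lemma connected_induce_image_supp (C : (G.induce F).ConnectedComponent) :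
    (G.induce ((↑) '' C.supp : Set V)).Connected := by
  let f : C.toSimpleGraph →g G.induce ((↑) '' C.supp) :=
    { toFun x := ⟨x.1, mem_image_of_mem _ x.2⟩, map_rel' := id }
  refine C.connected_toSimpleGraph.map f ?_
  rintro ⟨_, x, hx, rfl⟩
  exact ⟨⟨x, hx⟩, rfl⟩

lemma exists_adj_mem_image_supp (hF : (G.induce F).Connected) (hu : u ∈ F)
    (C : (G.induce (F \ {u})).ConnectedComponent) :
    ∃ w ∈ ((↑) '' C.supp : Set V), G.Adj u w := by
  obtain ⟨z, hz⟩ := C.nonempty_supp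
  obtain ⟨p⟩ := hF.preconnected ⟨z, z.2.1⟩ ⟨u, hu⟩
  let S : Set F := {x | x.1 ∈ ((↑) '' C.supp : Set V)}
  have huS : ⟨u, hu⟩ ∉ S := fun ⟨y, _, hy⟩ => y.2.2 hy
  obtain ⟨d, -, ⟨a, ha, had⟩, hd⟩ := p.exists_boundary_dart S ⟨z, hz, rfl⟩ huS
  have hadj : G.Adj a d.snd := had ▸ d.adj
  have hdu : d.snd.1 = u := by
    by_contra hne
    refine hd ⟨⟨d.snd, d.snd.2, hne⟩, ?_, rfl⟩
    exact C.mem_supp_of_adj_mem_supp ha hadj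
  exact ⟨a, ⟨a, ha, rfl⟩, hdu ▸ hadj.symm⟩

theorem rayless_induction (hray : ¬ HasRay G) {P : Set V → Prop}
    (hcomponents : ∀ F, (∀ C : (G.induce F).ConnectedComponent, P ((↑) '' C.supp)) → P F)
    (hinsert : ∀ F u, P F → P (insert u F)) (F : Set V) : P F := by
  have hconn (p : Set V × V) : p.2 ∈ p.1 → (G.induce p.1).Connected → P p.1 := by
    induction p using (wellFounded_of_not_hasRay hray).induction with
    | _ p ih =>
    intro hp hpconn
    rw [← insert_sdiff_self_of_mem hp]
    refine hinsert _ _ (hcomponents _ fun C => ?_)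
    obtain ⟨w, hw, hadj⟩ := exists_adj_mem_image_supp hpconn hp C
    exact ih ⟨_, w⟩ ⟨hw, Subtype.coe_image_subset _ _, hadj⟩ hw (connected_induce_image_supp C)
  refine hcomponents F fun C => ?_
  obtain ⟨x, hx⟩ := C.nonempty_supp
  exact hconn ⟨_, x⟩ (mem_image_of_mem _ hx) (connected_induce_image_supp C)

lemma hereditarilySolvable_of_not_hasRay (hray : ¬ HasRay G) (F : Set V) :
    HereditarilySolvable G F :=
  rayless_induction hray (fun _ => .of_components) (fun _ _ => .insert) F

end Rayless

/-- Every rayless graph admits an unfriendly partition. -/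
theorem rayless_unfriendly {V : Type*} (G : SimpleGraph V) (hray : ¬ HasRay G) :
    ∃ π : V → Bool, Unfriendly G π := by
  have hsolv : Solvable G univ := hereditarilySolvable_of_not_hasRay hray univ subset_rfl
  obtain ⟨π, -, hπ⟩ := hsolv fun _ => true
  exact ⟨π, fun x => hπ.happy (mem_univ x)⟩
end

section
/- Every graph containing no brush admits an unfriendly partition, where a brush is a comb all of whose teeth are vertices of infinite degree (equivalently: a ray linked disjointly to infinitely many vertices of infinite degree). -/
open Cardinal

/-- The set of vertices of infinite degree in `G`. -/
def Vinf {V : Type*} (G : SimpleGraph V) : Set V := {v : V | (G.neighborSet v).Infinite}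

/-- The set of vertices of infinite degree having only finitely many neighbours of infinite
degree. -/
def Vstar {V : Type*} (G : SimpleGraph V) : Set V :=
  {v : V | (G.neighborSet v).Infinite ∧ (G.neighborSet v ∩ Vinf G).Finite}

/-- `G` contains a comb with all teeth in `A`: a ray `r` together with infinitely many pairwise
disjoint finite paths, the `n`-th path going from the vertex `r (k n)` of the ray to a tooth
`t n ∈ A`, each path meeting the ray exactly in its first vertex. -/
def HasCombWithTeethIn {V : Type*} (G : SimpleGraph V) (A : Set V) : Prop :=
  ∃ (r : ℕ → V) (k : ℕ → ℕ) (t : ℕ → V) (p : ∀ n : ℕ, G.Walk (r (k n)) (t n)),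
    Function.Injective r ∧ (∀ n : ℕ, G.Adj (r n) (r (n + 1))) ∧
    StrictMono k ∧ (∀ n : ℕ, t n ∈ A) ∧ (∀ n : ℕ, (p n).IsPath) ∧
    (∀ m n : ℕ, m ≠ n → ∀ v : V, v ∈ (p m).support → v ∉ (p n).support) ∧
    (∀ n : ℕ, ∀ v ∈ (p n).support, (∃ i : ℕ, v = r i) → v = r (k n))

/-!
Call a set `S` of vertices extendable if every colouring of the complement of any `R ⊆ S` extends to
a colouring in which the vertices of `R` are happy, those of finite degree even stably so under
finite switches. A set of vertices of finite degree is extendable by compactness, and extendability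
passes from the components of `S` to `S`. It also survives adding finitely many vertices: adjoin
those of infinite degree in order of decreasing degree, and if the new vertex `a` is unhappy, switch
its colour. This can only harm a set of fewer than `deg a` of the old vertices, which are recoloured
together with everything reachable from them through vertices of comparably small degree; a vertex
outside sees fewer changes than its degree.

Hence if the whole vertex set is not extendable, then neither is some connected set, and after
deletion of any finite set of vertices it still contains a connected set that is not extendable.
Each of these contains a vertex of infinite degree, so a brush can be built greedily: walk to such a
vertex, delete the path walked, and continue into a smaller such set from one of its neighbours on
that path.
-/

section Switching

variable {V : Type*} {G : SimpleGraph V} {π ρ : V → Bool} {F F' : Set V} {v : V}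

lemma notMem_Vinf : v ∉ Vinf G ↔ (G.neighborSet v).Finite := Set.not_infinite

open scoped Classical in
/-- The two-colouring obtained from `π` by changing the colour of every vertex of `F`. -/
noncomputable def switch (F : Set V) (π : V → Bool) : V → Bool :=
  fun v => if v ∈ F then !π v else π v

lemma switch_of_mem (hv : v ∈ F) : switch F π v = !π v := if_pos hv

lemma switch_of_notMem (hv : v ∉ F) : switch F π v = π v := if_neg hv

lemma switch_singleton_self (v : V) : switch {v} π v = !π v := switch_of_mem (Set.mem_singleton v)

lemma switch_singleton_of_ne {w : V} (h : w ≠ v) : switch {v} π w = π w :=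
  switch_of_notMem (Set.mem_singleton_iff.not.2 h)

lemma switch_switch (F F' : Set V) (π : V → Bool) :
    switch F' (switch F π) = switch (symmDiff F F') π := by
  funext v
  by_cases hv : v ∈ F <;> by_cases hv' : v ∈ F' <;> simp [switch, Set.mem_symmDiff, hv', hv]

/-- The indicator function of the monochromatic pairs of the two-colouring `π`. -/
def monochromatic (π : V → Bool) (e : Sym2 V) : ℤ := if (e.map π).IsDiag then 1 else 0

lemma monochromatic_mk (π : V → Bool) (a b : V) :
    monochromatic π s(a, b) = if π a = π b then 1 else 0 := by
  simp [monochromatic]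

/-- The number of monochromatic edges that the two-colouring `π` loses, minus the number that it
gains, when the colours of the vertices of `F` are changed. As a `finsum`, it is meaningful only if
finitely many edges change, for instance if `F` is finite and its vertices have finite degree. -/
noncomputable def gain (G : SimpleGraph V) (π : V → Bool) (F : Set V) : ℤ :=
  ∑ᶠ e ∈ G.edgeSet, (monochromatic π e - monochromatic (switch F π) e)

lemma incidenceSet_eq_image (G : SimpleGraph V) (v : V) :
    G.incidenceSet v = (s(v, ·)) '' G.neighborSet v := by
  ext e
  induction e with | h a b =>
  simp only [G.mk'_mem_incidenceSet_iff, Set.mem_image, SimpleGraph.mem_neighborSet, Sym2.eq_iff]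
  grind [G.adj_comm]

lemma monochromatic_switch_of_notMem {e : Sym2 V} (he : e ∈ G.edgeSet)
    (h : e ∉ ⋃ v ∈ F, G.incidenceSet v) : monochromatic (switch F π) e = monochromatic π e := by
  induction e with | h a b =>
  have ha : a ∉ F := fun ha => h (Set.mem_biUnion ha (G.mk'_mem_incidenceSet_left_iff.2 he))
  have hb : b ∉ F := fun hb => h (Set.mem_biUnion hb (G.mk'_mem_incidenceSet_right_iff.2 he))
  simp only [monochromatic_mk, switch_of_notMem ha, switch_of_notMem hb]

lemma gain_eq_sum {T : Finset (Sym2 V)} (hTG : (T : Set (Sym2 V)) ⊆ G.edgeSet)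
    (hT : ⋃ v ∈ F, G.incidenceSet v ⊆ T) (π : V → Bool) :
    gain G π F = ∑ e ∈ T, (monochromatic π e - monochromatic (switch F π) e) := by
  refine finsum_mem_eq_sum_of_subset _ ?_ hTG
  rintro e ⟨heG, he⟩
  by_contra heT
  exact he (sub_eq_zero.2 (monochromatic_switch_of_notMem heG fun h => heT (hT h)).symm)

lemma gain_empty (π : V → Bool) : gain G π ∅ = 0 :=
  (gain_eq_sum (T := ∅) (by simp) (by simp) π).trans Finset.sum_empty

lemma exists_gain_eq_sum {Y : Set V} (hY : Y.Finite) (hdeg : Disjoint Y (Vinf G)) :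
    ∃ T : Finset (Sym2 V), (T : Set (Sym2 V)) ⊆ G.edgeSet ∧ ∀ F ⊆ Y, ∀ π : V → Bool,
      gain G π F = ∑ e ∈ T, (monochromatic π e - monochromatic (switch F π) e) := by
  have hfin : (⋃ v ∈ Y, G.incidenceSet v).Finite := hY.biUnion fun v hv =>
    incidenceSet_eq_image G v ▸ (notMem_Vinf.1 (hdeg.notMem_of_mem_left hv)).image _
  obtain ⟨T, hT⟩ := hfin.exists_finset_coe
  have hTG : (T : Set (Sym2 V)) ⊆ G.edgeSet :=
    hT ▸ Set.iUnion₂_subset fun v _ => G.incidenceSet_subset v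
  exact ⟨T, hTG, fun F hF => gain_eq_sum hTG (hT ▸ Set.biUnion_subset_biUnion_left hF)⟩

lemma gain_symmDiff (hF : F.Finite) (hF' : F'.Finite) (hdeg : Disjoint F (Vinf G))
    (hdeg' : Disjoint F' (Vinf G)) (π : V → Bool) :
    gain G π (symmDiff F F') = gain G π F + gain G (switch F π) F' := by
  obtain ⟨T, -, hT⟩ := exists_gain_eq_sum (hF.union hF') (hdeg.union_left hdeg')
  rw [hT _ symmDiff_le_sup, hT _ Set.subset_union_left, hT _ Set.subset_union_right,
    switch_switch, ← Finset.sum_add_distrib]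
  simp only [sub_add_sub_cancel]

lemma exists_gain_le {Y : Set V} (hY : Y.Finite) (hdeg : Disjoint Y (Vinf G)) :
    ∃ N : ℤ, ∀ F ⊆ Y, ∀ π : V → Bool, gain G π F ≤ N := by
  obtain ⟨T, -, hT⟩ := exists_gain_eq_sum hY hdeg
  refine ⟨T.card • 1, fun F hF π => hT F hF π ▸ Finset.sum_le_card_nsmul _ _ _ fun e _ => ?_⟩
  unfold monochromatic
  grind

lemma gain_union (hF : F.Finite) (hF' : F'.Finite) (hdeg : Disjoint F (Vinf G))
    (hdeg' : Disjoint F' (Vinf G)) (hdisj : Disjoint F F')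
    (hadj : ∀ a ∈ F, ∀ b ∈ F', ¬G.Adj a b) (π : V → Bool) :
    gain G π (F ∪ F') = gain G π F + gain G π F' := by
  obtain ⟨T, hTG, hT⟩ := exists_gain_eq_sum (hF.union hF') (hdeg.union_left hdeg')
  rw [hT _ subset_rfl, hT _ Set.subset_union_left, hT _ Set.subset_union_right,
    ← Finset.sum_add_distrib]
  refine Finset.sum_congr rfl fun e he => ?_
  induction e with | h a b =>
  have hab : G.Adj a b := hTG he
  have := Set.disjoint_left.1 hdisj
  simp only [monochromatic_mk, switch, Set.mem_union]
  grind [G.adj_comm]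

lemma gain_congr (hF : F.Finite) (hdeg : Disjoint F (Vinf G)) (heq : ∀ a ∈ F, π a = ρ a)
    (heq' : ∀ a ∈ F, ∀ b, G.Adj a b → π b = ρ b) : gain G π F = gain G ρ F := by
  obtain ⟨T, hTG, hT⟩ := exists_gain_eq_sum hF hdeg
  rw [hT _ subset_rfl, hT _ subset_rfl]
  refine Finset.sum_congr rfl fun e he => ?_
  induction e with | h a b =>
  have hab : G.Adj a b := hTG he
  simp only [monochromatic_mk, switch]
  grind [G.adj_comm]

lemma gain_switch_singleton_le {a : V} (hF : F.Finite) (hdeg : Disjoint F (Vinf G)) (ha : a ∉ F)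
    (hsame : ∀ v ∈ F, G.Adj a v → π v = π a) : gain G (switch {a} π) F ≤ gain G π F := by
  obtain ⟨T, hTG, hT⟩ := exists_gain_eq_sum hF hdeg
  rw [hT _ subset_rfl, hT _ subset_rfl]
  refine Finset.sum_le_sum fun e he => ?_
  induction e with | h x y =>
  have hxy : G.Adj x y := hTG he
  simp only [monochromatic_mk, switch, Set.mem_singleton_iff]
  grind [G.adj_comm]

lemma gain_singleton (hv : v ∉ Vinf G) (π : V → Bool) :
    gain G π {v} = {y | G.Adj v y ∧ π y = π v}.ncard - {y | G.Adj v y ∧ π y ≠ π v}.ncard := by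
  classical
  obtain ⟨N, hN⟩ := (notMem_Vinf.1 hv).exists_finset_coe
  have mem_N (y : V) : y ∈ N ↔ G.Adj v y := by rw [← Finset.mem_coe, hN, G.mem_neighborSet]
  have hT : G.incidenceSet v = N.image (s(v, ·)) := by
    rw [incidenceSet_eq_image, Finset.coe_image, hN]
  have hterm (y : V) (hy : y ∈ N) :
      monochromatic π s(v, y) - monochromatic (switch {v} π) s(v, y) =
        (if π y = π v then 1 else 0) - if π y ≠ π v then 1 else 0 := by
    rw [monochromatic_mk, monochromatic_mk, switch_singleton_self,
      switch_singleton_of_ne ((mem_N y).1 hy).ne']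
    cases π v <;> cases π y <;> rfl
  have hcard (p : V → Prop) [DecidablePred p] :
      {y | G.Adj v y ∧ p y}.ncard = (N.filter p).card := by
    rw [← Set.ncard_coe_finset]
    congr 1
    ext y
    simp [mem_N]
  rw [gain_eq_sum (hT ▸ G.incidenceSet_subset v) (by rw [Set.biUnion_singleton, hT]),
    Finset.sum_image fun y _ z _ h => Sym2.congr_right.1 h, Finset.sum_congr rfl hterm,
    Finset.sum_sub_distrib, Finset.sum_boole, Finset.sum_boole, hcard, hcard]

end Switching

section Optimal

variable {V : Type*} {G : SimpleGraph V} {π ρ : V → Bool} {S S' F : Set V} {v : V}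

/-- `π` is optimal on `S` if switching finitely many finite-degree vertices of `S` never decreases
the number of monochromatic edges. -/
def Optimal (G : SimpleGraph V) (S : Set V) (π : V → Bool) : Prop :=
  ∀ F ⊆ S \ Vinf G, F.Finite → gain G π F ≤ 0

lemma disjoint_Vinf_of_subset (hF : F ⊆ S \ Vinf G) : Disjoint F (Vinf G) :=
  Set.disjoint_sdiff_left.mono_left hF

lemma Optimal.mono (h : Optimal G S π) (hS : S' \ Vinf G ⊆ S) : Optimal G S' π :=
  fun F hF => h F fun _ hx => ⟨hS (hF hx), (hF hx).2⟩

lemma Optimal.congr (h : Optimal G S π) (heq : ∀ a ∈ S \ Vinf G, ρ a = π a)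
    (heq' : ∀ a ∈ S \ Vinf G, ∀ b, G.Adj a b → ρ b = π b) : Optimal G S ρ := fun F hF hfin =>
  (gain_congr hfin (disjoint_Vinf_of_subset hF) (fun a ha => heq a (hF ha))
    fun a ha => heq' a (hF ha)).trans_le (h F hF hfin)

lemma exists_optimal_switch {N : ℤ} (hN : ∀ F ⊆ S \ Vinf G, F.Finite → gain G π F ≤ N) :
    ∃ F ⊆ S \ Vinf G, F.Finite ∧ Optimal G S (switch F π) := by
  obtain ⟨_, ⟨F, hF, hfin, rfl⟩, hmax⟩ := Int.exists_greatest_of_bdd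
    (P := fun z => ∃ F ⊆ S \ Vinf G, F.Finite ∧ gain G π F = z)
    ⟨N, by rintro _ ⟨F, hF, hfin, rfl⟩; exact hN F hF hfin⟩
    ⟨_, ∅, Set.empty_subset _, Set.finite_empty, rfl⟩
  refine ⟨F, hF, hfin, fun F' hF' hfin' => ?_⟩
  have hsymm := gain_symmDiff hfin hfin' (disjoint_Vinf_of_subset hF)
    (disjoint_Vinf_of_subset hF') π
  have hle := hmax _ ⟨symmDiff F F', symmDiff_le_sup.trans (Set.union_subset hF hF'),
    hfin.symmDiff hfin', rfl⟩
  linarith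

lemma Optimal.of_fibers {ι : Type*} (ℓ : V → ι)
    (hℓ : ∀ a ∈ S \ Vinf G, ∀ b ∈ S \ Vinf G, G.Adj a b → ℓ a = ℓ b)
    (h : ∀ i, Optimal G (S ∩ ℓ ⁻¹' {i}) π) : Optimal G S π := by
  intro F hF hfin
  induction hn : F.ncard using Nat.strong_induction_on generalizing F with | _ n ih =>
  obtain rfl | ⟨a, ha⟩ := F.eq_empty_or_nonempty
  · exact (gain_empty π).le
  have hdeg := disjoint_Vinf_of_subset hF
  have hin : F ∩ ℓ ⁻¹' {ℓ a} ⊆ F := Set.inter_subset_left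
  have hout : F \ ℓ ⁻¹' {ℓ a} ⊆ F := Set.sdiff_subset
  have hsplit : gain G π F = gain G π (F ∩ ℓ ⁻¹' {ℓ a}) + gain G π (F \ ℓ ⁻¹' {ℓ a}) := by
    rw [← gain_union (hfin.subset hin) (hfin.subset hout) (hdeg.mono_left hin)
      (hdeg.mono_left hout) (Set.disjoint_sdiff_right.mono_left Set.inter_subset_right),
      Set.inter_union_sdiff]
    exact fun b hb c hc hbc => hc.2 ((hℓ b (hF hb.1) c (hF hc.1) hbc).symm.trans hb.2)
  have hlt : (F \ ℓ ⁻¹' {ℓ a}).ncard < n :=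
    hn ▸ Set.ncard_lt_ncard (Set.ssubset_iff_of_subset hout |>.2 ⟨a, ha, fun h => h.2 rfl⟩) hfin
  have := ih _ hlt _ (hout.trans hF) (hfin.subset hout) rfl
  have := h (ℓ a) _ (fun b hb => ⟨⟨(hF hb.1).1, hb.2⟩, (hF hb.1).2⟩) (hfin.subset hin)
  linarith

lemma Optimal.happy (h : Optimal G S π) (hv : v ∈ S) (hdeg : v ∉ Vinf G) : Happy G π v := by
  have hgain := h {v} (Set.singleton_subset_iff.2 ⟨hv, hdeg⟩) (Set.finite_singleton v)
  have hfin (p : V → Prop) : {y | G.Adj v y ∧ p y}.Finite :=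
    (notMem_Vinf.1 hdeg).subset fun _ hy => hy.1
  rw [gain_singleton hdeg, sub_nonpos, Nat.cast_le] at hgain
  rw [Happy, ← Set.cast_ncard (hfin _), ← Set.cast_ncard (hfin _)]
  exact_mod_cast hgain

end Optimal

section InfiniteDegree

variable {V : Type*} {G : SimpleGraph V} {π ρ : V → Bool} {v : V}

lemma mem_Vinf_iff : v ∈ Vinf G ↔ ℵ₀ ≤ #(G.neighborSet v) := by
  rw [Cardinal.aleph0_le_mk_iff, Set.infinite_coe_iff]
  rfl

lemma mk_lt_of_finite {Z : Set V} (hv : v ∈ Vinf G) (hZ : Z.Finite) : #Z < #(G.neighborSet v) :=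
  hZ.lt_aleph0.trans_le (mem_Vinf_iff.1 hv)

lemma le_mk_sdiff {X Z : Set V} {κ : Cardinal} (h0 : ℵ₀ ≤ κ) (hX : κ ≤ #X)
    (hZ : #Z < κ) : κ ≤ #(X \ Z : Set V) := by
  by_contra! h
  exact ((hX.trans (le_mk_sdiff_add_mk X Z)).trans_lt (add_lt_of_lt h0 h hZ)).false

lemma happy_of_mk_neighborSet_le (h : #(G.neighborSet v) ≤ #{y | G.Adj v y ∧ π y ≠ π v}) :
    Happy G π v :=
  (mk_le_mk_of_subset fun _ hy => hy.1).trans h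

lemma mk_neighborSet_le_add (G : SimpleGraph V) (π : V → Bool) (v : V) : #(G.neighborSet v) ≤
    #{y | G.Adj v y ∧ π y = π v} + #{y | G.Adj v y ∧ π y ≠ π v} :=
  (mk_le_mk_of_subset fun y hy => (em (π y = π v)).imp (⟨hy, ·⟩) (⟨hy, ·⟩)).trans
    (mk_union_le _ _)

lemma Happy.mk_neighborSet_le (h : Happy G π v) (hv : v ∈ Vinf G) :
    #(G.neighborSet v) ≤ #{y | G.Adj v y ∧ π y ≠ π v} := by
  by_contra! hlt
  exact ((mk_neighborSet_le_add G π v).trans_lt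
    (add_lt_of_lt (mem_Vinf_iff.1 hv) (h.trans_lt hlt) hlt)).false

lemma mk_neighborSet_le_of_not_happy (h : ¬Happy G π v) (hv : v ∈ Vinf G) :
    #(G.neighborSet v) ≤ #{y | G.Adj v y ∧ π y = π v} := by
  by_contra! hlt
  exact ((mk_neighborSet_le_add G π v).trans_lt
    (add_lt_of_lt (mem_Vinf_iff.1 hv) hlt ((not_le.1 h).trans hlt))).false

lemma mk_lt_of_not_happy (h : ¬Happy G π v) :
    #{y | G.Adj v y ∧ π y ≠ π v} < #(G.neighborSet v) :=
  (not_le.1 h).trans_le (mk_le_mk_of_subset fun _ hy => hy.1)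

lemma Happy.of_mk_lt (h : Happy G π v) (hv : v ∈ Vinf G) (heq : ρ v = π v)
    (hlt : #{y | G.Adj v y ∧ ρ y ≠ π y} < #(G.neighborSet v)) : Happy G ρ v := by
  refine happy_of_mk_neighborSet_le ((le_mk_sdiff (mem_Vinf_iff.1 hv) (h.mk_neighborSet_le hv)
    hlt).trans (mk_le_mk_of_subset ?_))
  rintro y ⟨⟨hy, hne⟩, hy'⟩
  exact ⟨hy, heq ▸ (not_not.1 fun h' => hy' ⟨hy, h'⟩) ▸ hne⟩

end InfiniteDegree

section StronglyUnfriendlyOn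

variable {V : Type*} {G : SimpleGraph V} {π ρ : V → Bool} {S T R W Y : Set V} {a v : V}

/-- The strengthening of unfriendliness on `S` that is carried through the construction: the
vertices of `S` of infinite degree are happy, and the colours of those of finite degree cannot be
improved by finite switches. -/
structure StronglyUnfriendlyOn (G : SimpleGraph V) (S : Set V) (π : V → Bool) : Prop where
  happy_of_mem_Vinf : ∀ v ∈ S, v ∈ Vinf G → Happy G π v
  optimal : Optimal G S π

namespace StronglyUnfriendlyOn

lemma happy (h : StronglyUnfriendlyOn G S π) (hv : v ∈ S) : Happy G π v := by
  by_cases hdeg : v ∈ Vinf G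
  · exact h.happy_of_mem_Vinf v hv hdeg
  · exact h.optimal.happy hv hdeg

protected lemma mono (h : StronglyUnfriendlyOn G T π) (hST : S ⊆ T) : StronglyUnfriendlyOn G S π :=
  ⟨fun v hv => h.happy_of_mem_Vinf v (hST hv), h.optimal.mono (Set.sdiff_subset.trans hST)⟩

protected lemma insert (h : StronglyUnfriendlyOn G S π) (ha : a ∈ Vinf G) (hhappy : Happy G π a) :
    StronglyUnfriendlyOn G (insert a S) π := by
  refine ⟨?_, h.optimal.mono ?_⟩
  · rintro v (rfl | hv) hdeg
    exacts [hhappy, h.happy_of_mem_Vinf v hv hdeg]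
  · rintro v ⟨rfl | hv, hdeg⟩
    exacts [absurd ha hdeg, hv]

lemma switch_singleton (h : StronglyUnfriendlyOn G T π) (ha : a ∈ Vinf G)
    (hunhappy : ¬Happy G π a) (hRT : R ⊆ insert a T)
    (hsame : ∀ v ∈ R, v ∉ Vinf G → G.Adj a v → π v = π a) :
    StronglyUnfriendlyOn G R (switch {a} π) := by
  refine ⟨fun v hv hdeg => ?_, fun F hF hfin => ?_⟩
  · obtain rfl | hva := eq_or_ne v a
    · refine happy_of_mk_neighborSet_le ((mk_neighborSet_le_of_not_happy hunhappy ha).trans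
        (mk_le_mk_of_subset fun y hy => ⟨hy.1, ?_⟩))
      rw [switch_singleton_self, switch_singleton_of_ne hy.1.ne', hy.2]
      exact (Bool.not_ne_self _).symm
    · refine (h.happy_of_mem_Vinf v ((hRT hv).resolve_left hva) hdeg).of_mk_lt hdeg
        (switch_singleton_of_ne hva) (mk_lt_of_finite hdeg ((Set.finite_singleton a).subset ?_))
      exact fun y hy => not_not.1 fun hya => hy.2 (switch_singleton_of_ne hya)
  · have haF : a ∉ F := fun h => (hF h).2 ha
    have hFT : F ⊆ T \ Vinf G := fun v hv =>
      ⟨(hRT (hF hv).1).resolve_left (ne_of_mem_of_not_mem hv haF), (hF hv).2⟩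
    exact (gain_switch_singleton_le hfin (disjoint_Vinf_of_subset hF) haF fun v hv =>
      hsame v (hF hv).1 (hF hv).2).trans (h.optimal F hFT hfin)

lemma exists_union_finite (h : StronglyUnfriendlyOn G S π) (hY : Y.Finite)
    (hdeg : Disjoint Y (Vinf G)) :
    ∃ ρ, (∀ v ∉ S ∪ Y, ρ v = π v) ∧ StronglyUnfriendlyOn G (S ∪ Y) ρ := by
  obtain ⟨N, hN⟩ := exists_gain_le hY hdeg
  have hgain : ∀ F ⊆ (S ∪ Y) \ Vinf G, F.Finite → gain G π F ≤ N := fun F hF hfin => by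
    have hinter : F ∩ S ⊆ S \ Vinf G := fun v hv => ⟨hv.2, (hF hv.1).2⟩
    have hdiff : F \ S ⊆ Y := fun v hv => (hF hv.1).1.resolve_left hv.2
    have hsplit : symmDiff (F ∩ S) (F \ S) = F := by
      rw [(Set.disjoint_sdiff_right.mono_left Set.inter_subset_right).symmDiff_eq_sup]
      exact Set.inter_union_sdiff F S
    have hsymm := gain_symmDiff (hfin.inter_of_left S) hfin.sdiff (disjoint_Vinf_of_subset hinter)
      (hdeg.mono_left hdiff) π
    rw [hsplit] at hsymm
    linarith [h.optimal _ hinter (hfin.inter_of_left S), hN _ hdiff (switch (F ∩ S) π)]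
  obtain ⟨F, hF, hfin, hopt⟩ := exists_optimal_switch hgain
  refine ⟨switch F π, fun v hv => switch_of_notMem fun h => hv (hF h).1,
    fun v hv hvdeg => ?_, hopt⟩
  have hvS : v ∈ S := hv.resolve_right fun hvY => hdeg.notMem_of_mem_left hvY hvdeg
  refine (h.happy_of_mem_Vinf v hvS hvdeg).of_mk_lt hvdeg
    (switch_of_notMem fun h => (hF h).2 hvdeg) (mk_lt_of_finite hvdeg (hfin.subset ?_))
  exact fun y hy => not_not.1 fun hyF => hy.2 (switch_of_notMem hyF)

protected lemma union (hρ : StronglyUnfriendlyOn G R ρ) (hπ : StronglyUnfriendlyOn G W π)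
    (hRW : Disjoint R W) (heq : ∀ v ∉ W, π v = ρ v)
    (hadj : ∀ v ∈ R, ∀ w ∈ W, G.Adj v w → v ∈ Vinf G ∧ #W < #(G.neighborSet v)) :
    StronglyUnfriendlyOn G (R ∪ W) π := by
  have hmem {y : V} (hy : π y ≠ ρ y) : y ∈ W := not_not.1 fun hyW => hy (heq y hyW)
  refine ⟨?_, Optimal.of_fibers (· ∈ W) ?_ fun i => ?_⟩
  · rintro v (hv | hv) hdeg
    · refine (hρ.happy_of_mem_Vinf v hv hdeg).of_mk_lt hdeg (heq v (hRW.notMem_of_mem_left hv)) ?_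
      obtain hemp | ⟨y, hy, hne⟩ := {y | G.Adj v y ∧ π y ≠ ρ y}.eq_empty_or_nonempty
      · exact mk_lt_of_finite hdeg (hemp ▸ Set.finite_empty)
      · exact (mk_le_mk_of_subset fun z hz => hmem hz.2).trans_lt (hadj v hv y (hmem hne) hy).2
    · exact hπ.happy_of_mem_Vinf v hv hdeg
  · have hside {b c : V} (hb : b ∈ (R ∪ W) \ Vinf G) (hbc : G.Adj b c) (hc : c ∈ W) : b ∈ W :=
      hb.1.resolve_left fun hbR => hb.2 (hadj b hbR c hc hbc).1
    exact fun b hb c hc hbc => propext ⟨hside hc hbc.symm, hside hb hbc⟩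
  · by_cases hi : i
    · refine hπ.optimal.mono fun v hv => ?_
      simpa [hi] using hv.1.2
    · have hR {v : V} (hv : v ∈ ((R ∪ W) ∩ (· ∈ W) ⁻¹' {i}) \ Vinf G) : v ∈ R ∧ v ∉ Vinf G := by
        have hvW : v ∉ W := by simpa [hi] using hv.1.2
        exact ⟨hv.1.1.resolve_right hvW, hv.2⟩
      refine (hρ.optimal.mono fun v hv => (hR hv).1).congr
        (fun v hv => heq v (hRW.notMem_of_mem_left (hR hv).1)) fun v hv w hvw => heq w fun hw => ?_
      exact (hR hv).2 (hadj v (hR hv).1 w hw hvw).1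

end StronglyUnfriendlyOn

end StronglyUnfriendlyOn

lemma exists_adj_closed_mk_le {V : Type*} {G : SimpleGraph V} {B D : Set V} {μ : Cardinal}
    (h0 : ℵ₀ ≤ μ) (hBD : B ⊆ D) (hB : #B ≤ μ) (hD : ∀ v ∈ D, #(G.neighborSet v) ≤ μ) :
    ∃ W ⊆ D, B ⊆ W ∧ (∀ v ∈ W, ∀ w ∈ D, G.Adj v w → w ∈ W) ∧ #W ≤ μ := by
  let next (X : Set V) : Set V := D ∩ ⋃ u ∈ X, G.neighborSet u
  let L (n : ℕ) : Set V := next^[n] B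
  have L_succ (n : ℕ) : L (n + 1) = next (L n) := Function.iterate_succ_apply' next n B
  have hLD (n : ℕ) : L n ⊆ D := by
    cases n with
    | zero => exact hBD
    | succ n => exact L_succ n ▸ Set.inter_subset_left
  have hL (n : ℕ) : #(L n) ≤ μ := by
    induction n with
    | zero => exact hB
    | succ n ih =>
      calc #(L (n + 1)) ≤ #(⋃ u ∈ L n, G.neighborSet u : Set V) :=
            mk_le_mk_of_subset (L_succ n ▸ Set.inter_subset_right)
        _ ≤ #(L n) * ⨆ u : L n, #(G.neighborSet u) := mk_biUnion_le _ _
        _ ≤ μ := mul_le_of_le h0 ih (ciSup_le' fun u => hD u (hLD n u.2))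
  refine ⟨⋃ n, L n, Set.iUnion_subset hLD, Set.subset_iUnion L 0, fun v hv w hw hvw => ?_, ?_⟩
  · obtain ⟨n, hn⟩ := Set.mem_iUnion.1 hv
    exact Set.mem_iUnion.2 ⟨n + 1, L_succ n ▸ ⟨hw, Set.mem_biUnion hn hvw⟩⟩
  · have := mk_iUnion_le_lift L
    simp only [lift_uzero, mk_nat, lift_aleph0] at this
    exact this.trans (mul_le_of_le h0 h0 (ciSup_le' hL))

section Extendable

variable {V : Type*} {G : SimpleGraph V} {π : V → Bool} {S T Y : Set V} {a : V}

/-- `S` is extendable if, for every subset `R` of `S`, any colouring of the complement of `R`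
extends to a two-colouring that is strongly unfriendly on `R`. -/
def Extendable (G : SimpleGraph V) (S : Set V) : Prop :=
  ∀ R ⊆ S, ∀ c : V → Bool, ∃ π, (∀ v ∉ R, π v = c v) ∧ StronglyUnfriendlyOn G R π

namespace Extendable

protected lemma mono (h : Extendable G T) (hST : S ⊆ T) : Extendable G S :=
  fun R hR => h R (hR.trans hST)

lemma of_disjoint_Vinf (hS : Disjoint S (Vinf G)) : Extendable G S := by
  intro R hR c
  have hfinite (t : Finset V) : ∃ π, (∀ v ∉ R, π v = c v) ∧ Optimal G (t ∩ R) π := by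
    have hempty : StronglyUnfriendlyOn G ∅ c := ⟨by simp, fun F hF _ => by
      rw [Set.subset_empty_iff.1 (hF.trans Set.sdiff_subset), gain_empty]⟩
    obtain ⟨π, hπc, hπ⟩ := hempty.exists_union_finite (t.finite_toSet.inter_of_left R)
      (hS.mono_left (Set.inter_subset_right.trans hR))
    rw [Set.empty_union] at hπc hπ
    exact ⟨π, fun v hv => hπc v fun h => hv h.2, hπ.optimal⟩
  choose g hgc hg using hfinite
  obtain ⟨π, hπ⟩ := Finset.rado_selection g
  refine ⟨π, fun v hv => ?_, fun v hv hdeg => (hS.notMem_of_mem_left (hR hv) hdeg).elim,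
    fun F hF hfin => ?_⟩
  · obtain ⟨t, -, ht⟩ := hπ {v}
    rw [ht v (Finset.mem_singleton_self v), hgc t v hv]
  · have hdeg := disjoint_Vinf_of_subset hF
    have hball : (F ∪ ⋃ v ∈ F, G.neighborSet v).Finite := hfin.union
      (hfin.biUnion fun v hv => notMem_Vinf.1 (hdeg.notMem_of_mem_left hv))
    obtain ⟨s, hs⟩ := hball.exists_finset_coe
    have hFs {v : V} (hv : v ∈ F) : v ∈ s := by
      rw [← Finset.mem_coe, hs]
      exact Or.inl hv
    have hNs {v w : V} (hv : v ∈ F) (hvw : G.Adj v w) : w ∈ s := by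
      rw [← Finset.mem_coe, hs]
      exact Or.inr (Set.mem_biUnion hv hvw)
    obtain ⟨t, hst, ht⟩ := hπ s
    rw [gain_congr hfin hdeg (fun v hv => ht v (hFs hv)) fun v hv w hvw => ht w (hNs hv hvw)]
    exact hg t F (fun v hv => ⟨⟨hst (hFs hv), (hF hv).1⟩, (hF hv).2⟩) hfin

lemma exists_insert_of_infinite (hS : Extendable G S) (hST : S ⊆ T)
    (hT : ∀ x ∈ T \ S, x ∈ Vinf G ∧ #(G.neighborSet a) ≤ #(G.neighborSet x)) (ha : a ∈ Vinf G)
    (hπ : StronglyUnfriendlyOn G T π) (hunhappy : ¬Happy G π a)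
    (hinf : {y | G.Adj a y ∧ π y ≠ π a}.Infinite) :
    ∃ ρ, (∀ v ∉ insert a T, ρ v = π v) ∧ StronglyUnfriendlyOn G (insert a T) ρ := by
  set B := {y | G.Adj a y ∧ π y ≠ π a}
  have hB0 : ℵ₀ ≤ #B := aleph0_le_mk_iff.2 hinf.to_subtype
  have hBa : #B < #(G.neighborSet a) := mk_lt_of_not_happy hunhappy
  obtain ⟨W, hWD, hBW, hclosed, hWB⟩ := exists_adj_closed_mk_le (G := G)
    (B := B ∩ {v ∈ S | #(G.neighborSet v) ≤ #B}) hB0 Set.inter_subset_right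
    (mk_le_mk_of_subset Set.inter_subset_left) fun v hv => hv.2
  have hswitch : StronglyUnfriendlyOn G (insert a T \ W) (switch {a} π) := by
    refine hπ.switch_singleton ha hunhappy Set.sdiff_subset fun v hv hdeg hav => ?_
    by_contra hne
    have hvT : v ∈ T := hv.1.resolve_left hav.ne'
    have hvS : v ∈ S := not_not.1 fun hvS => hdeg (hT v ⟨hvT, hvS⟩).1
    exact hv.2 (hBW ⟨⟨hav, hne⟩, hvS, (notMem_Vinf.1 hdeg).lt_aleph0.le.trans hB0⟩)
  obtain ⟨ρ, hρπ, hρ⟩ := hS W (fun v hv => (hWD hv).1) (switch {a} π)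
  have hWT : W ⊆ insert a T := fun v hv => Or.inr (hST (hWD hv).1)
  refine ⟨ρ, fun v hv => ?_, ?_⟩
  · rw [hρπ v fun hvW => hv (hWT hvW), switch_singleton_of_ne fun hva => hv (Or.inl hva)]
  rw [← Set.sdiff_union_of_subset hWT]
  refine hswitch.union hρ Set.disjoint_sdiff_left hρπ fun v hv w hw hvw => ?_
  suffices h : #B < #(G.neighborSet v) from
    ⟨mem_Vinf_iff.2 (hB0.trans h.le), hWB.trans_lt h⟩
  obtain ⟨rfl | hvT, hvW⟩ := hv
  · exact hBa
  by_cases hvS : v ∈ S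
  · by_contra! hle
    exact hvW (hclosed w hw v ⟨hvS, hle⟩ hvw.symm)
  · exact hBa.trans_le (hT v ⟨hvT, hvS⟩).2

lemma exists_insert (hS : Extendable G S) (hST : S ⊆ T)
    (hT : ∀ x ∈ T \ S, x ∈ Vinf G ∧ #(G.neighborSet a) ≤ #(G.neighborSet x)) (ha : a ∈ Vinf G)
    (hπ : StronglyUnfriendlyOn G T π) :
    ∃ ρ, (∀ v ∉ insert a T, ρ v = π v) ∧ StronglyUnfriendlyOn G (insert a T) ρ := by
  by_cases hhappy : Happy G π a
  · exact ⟨π, fun _ _ => rfl, hπ.insert ha hhappy⟩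
  obtain hfin | hinf := {y | G.Adj a y ∧ π y ≠ π a}.finite_or_infinite
  · set Y := (insert a T ∩ {y | G.Adj a y ∧ π y ≠ π a}) \ Vinf G
    have hYT : Y ⊆ insert a T := fun v hv => hv.1.1
    have hswitch : StronglyUnfriendlyOn G (insert a T \ Y) (switch {a} π) :=
      hπ.switch_singleton ha hhappy Set.sdiff_subset fun v hv hdeg hav =>
        not_not.1 fun hne => hv.2 ⟨⟨hv.1, hav, hne⟩, hdeg⟩
    obtain ⟨ρ, hρπ, hρ⟩ := hswitch.exists_union_finite (Y := Y)
      (hfin.subset fun v hv => hv.1.2) Set.disjoint_sdiff_left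
    rw [Set.sdiff_union_of_subset hYT] at hρπ hρ
    exact ⟨ρ, fun v hv => (hρπ v hv).trans (switch_singleton_of_ne fun hva => hv (Or.inl hva)), hρ⟩
  · exact hS.exists_insert_of_infinite hST hT ha hπ hhappy hinf

lemma exists_union_finset (hS : Extendable G S) (s : Finset V) (hs : ∀ x ∈ s, x ∈ Vinf G)
    (c : V → Bool) :
    ∃ π, (∀ v ∉ S ∪ s, π v = c v) ∧ StronglyUnfriendlyOn G (S ∪ s) π := by
  classical
  induction s using Finset.induction_on_min_value (fun v => #(G.neighborSet v)) with
  | empty => simpa using hS S subset_rfl c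
  | insert a s _ hmin ih =>
    obtain ⟨π, hπc, hπ⟩ := ih fun x hx => hs x (Finset.mem_insert_of_mem hx)
    have hT : ∀ x ∈ (S ∪ s) \ S, x ∈ Vinf G ∧ #(G.neighborSet a) ≤ #(G.neighborSet x) := by
      intro x hx
      have hxs : x ∈ s := hx.1.resolve_left hx.2
      exact ⟨hs x (Finset.mem_insert_of_mem hxs), hmin x hxs⟩
    obtain ⟨ρ, hρπ, hρ⟩ := hS.exists_insert Set.subset_union_left hT
      (hs a (Finset.mem_insert_self a s)) hπ
    rw [Finset.coe_insert, Set.union_insert]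
    exact ⟨ρ, fun v hv => (hρπ v hv).trans (hπc v fun h => hv (Or.inr h)), hρ⟩

lemma of_sdiff_finite (hY : Y.Finite) (h : Extendable G (S \ Y)) : Extendable G S := by
  intro R hR c
  obtain ⟨s, hs⟩ := (hY.subset (Set.inter_subset_right.trans Set.inter_subset_right :
    Vinf G ∩ (R ∩ Y) ⊆ Y)).exists_finset_coe
  obtain ⟨π, hπc, hπ⟩ := (h.mono (Set.sdiff_subset_sdiff_left hR)).exists_union_finset s
    (fun x hx => (hs ▸ hx : x ∈ Vinf G ∩ (R ∩ Y)).1) c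
  have hunion : R \ Y ∪ s ∪ (R ∩ Y) \ Vinf G = R := by
    rw [hs, Set.union_assoc, Set.inter_comm, Set.inter_union_sdiff, Set.sdiff_union_inter]
  obtain ⟨ρ, hρπ, hρ⟩ := hπ.exists_union_finite (Y := (R ∩ Y) \ Vinf G)
    (hY.subset fun v hv => hv.1.2) Set.disjoint_sdiff_left
  rw [hunion] at hρπ hρ
  refine ⟨ρ, fun v hv => (hρπ v hv).trans (hπc v fun hv' => hv ?_), hρ⟩
  exact hunion ▸ Or.inl hv'

lemma of_fibers {ι : Type*} (ℓ : V → ι) (hℓ : ∀ a ∈ S, ∀ b ∈ S, G.Adj a b → ℓ a = ℓ b)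
    (h : ∀ i, Extendable G (S ∩ ℓ ⁻¹' {i})) : Extendable G S := by
  intro R hR c
  choose p hpc hp using fun i => h i (R ∩ ℓ ⁻¹' {i}) (Set.inter_subset_inter_left _ hR) c
  have hadj {v w : V} (hv : v ∈ R) (hvw : G.Adj v w) : p (ℓ w) w = p (ℓ v) w := by
    by_cases hw : w ∈ R
    · rw [hℓ v (hR hv) w (hR hw) hvw]
    · rw [hpc _ w fun h => hw h.1, hpc _ w fun h => hw h.1]
  refine ⟨fun v => p (ℓ v) v, fun v hv => hpc _ v fun h => hv h.1, fun v hv hdeg => ?_,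
    Optimal.of_fibers ℓ (fun a ha b hb => hℓ a (hR ha.1) b (hR hb.1)) fun i => ?_⟩
  · refine ((hp (ℓ v)).happy_of_mem_Vinf v ⟨hv, rfl⟩ hdeg).of_mk_lt hdeg rfl
      (mk_lt_of_finite hdeg (Set.finite_empty.subset ?_))
    exact fun w hw => hw.2 (hadj hv hw.1)
  · refine (hp i).optimal.congr ?_ ?_
    · rintro v ⟨⟨-, rfl⟩, -⟩
      rfl
    · rintro v ⟨⟨hv, rfl⟩, -⟩ w hvw
      exact hadj hv hvw

end Extendable

end Extendable

section Obstruction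

variable {V : Type*} {G : SimpleGraph V} {S C Y : Set V}

/-- An obstruction is a connected set of vertices that is not extendable. The proof assumes that one
exists and builds a brush in it. -/
structure IsObstruction (G : SimpleGraph V) (C : Set V) : Prop where
  preconnected : (G.induce C).Preconnected
  not_extendable : ¬Extendable G C

lemma exists_isObstruction (hS : ¬Extendable G S) :
    ∃ C ⊆ S, IsObstruction G C ∧ ∀ v ∈ C, ∀ w ∈ S, G.Adj v w → w ∈ C := by
  let H := (G.induce S).spanningCoe
  have H_adj {v w : V} : H.Adj v w ↔ G.Adj v w ∧ v ∈ S ∧ w ∈ S := by simp [H]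
  have component_eq {v w : V} (hv : v ∈ S) (hw : w ∈ S) (hvw : G.Adj v w) :
      H.connectedComponentMk v = H.connectedComponentMk w :=
    SimpleGraph.ConnectedComponent.connectedComponentMk_eq_of_adj (H_adj.2 ⟨hvw, hv, hw⟩)
  obtain ⟨i, hi⟩ : ∃ i, ¬Extendable G (S ∩ H.connectedComponentMk ⁻¹' {i}) := by
    by_contra! h
    exact hS (.of_fibers _ (fun v hv w hw => component_eq hv hw) h)
  set C := S ∩ H.connectedComponentMk ⁻¹' {i}
  have hclosed : ∀ v ∈ C, ∀ w ∈ S, G.Adj v w → w ∈ C := fun v hv w hw hvw =>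
    ⟨hw, (component_eq hv.1 hw hvw).symm.trans hv.2⟩
  have hwalk {v w : V} (p : H.Walk v w) :
      ∀ (hv : v ∈ C) (hw : w ∈ C), (G.induce C).Reachable ⟨v, hv⟩ ⟨w, hw⟩ := by
    induction p with
    | nil => exact fun _ _ => .rfl
    | cons h _ ih =>
      obtain ⟨hadj, -, hx⟩ := H_adj.1 h
      intro hv hw
      have hxC := hclosed _ hv _ hx hadj
      exact (SimpleGraph.induce_adj.2 hadj : (G.induce C).Adj ⟨_, hv⟩ ⟨_, hxC⟩).reachable.trans
        (ih hxC hw)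
  refine ⟨C, Set.inter_subset_left, ⟨fun v w => ?_, hi⟩, hclosed⟩
  obtain ⟨p⟩ := SimpleGraph.ConnectedComponent.exact (v.2.2.trans w.2.2.symm)
  exact hwalk p v.2 w.2

lemma exists_isPath_of_preconnected_induce (hC : (G.induce C).Preconnected) {x y : V} (hx : x ∈ C)
    (hy : y ∈ C) : ∃ p : G.Walk x y, p.IsPath ∧ ∀ v ∈ p.support, v ∈ C := by
  obtain ⟨p, hp⟩ := (hC ⟨x, hx⟩ ⟨y, hy⟩).exists_isPath
  refine ⟨p.map (SimpleGraph.Embedding.induce C).toHom, hp.map Subtype.val_injective, ?_⟩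
  intro v hv
  obtain ⟨w, -, rfl⟩ := List.mem_map.1
    (SimpleGraph.Walk.support_map (SimpleGraph.Embedding.induce C).toHom p ▸ hv)
  exact w.2

namespace IsObstruction

lemma nonempty (hC : IsObstruction G C) : C.Nonempty := by
  by_contra! h
  exact hC.not_extendable (.of_disjoint_Vinf (h ▸ Set.empty_disjoint _))

lemma exists_mem_Vinf (hC : IsObstruction G C) : ∃ v ∈ C, v ∈ Vinf G :=
  Set.not_disjoint_iff.1 fun h => hC.not_extendable (.of_disjoint_Vinf h)

lemma exists_subset_sdiff (hC : IsObstruction G C) (hY : Y.Finite) (hne : (Y ∩ C).Nonempty) :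
    ∃ C' ⊆ C \ Y, IsObstruction G C' ∧ ∃ q ∈ Y, ∃ y ∈ C', G.Adj q y := by
  obtain ⟨C', hC', hobs, hclosed⟩ :=
    exists_isObstruction fun h => hC.not_extendable (.of_sdiff_finite hY h)
  obtain ⟨x, hxY, hxC⟩ := hne
  obtain ⟨u, hu⟩ := hobs.nonempty
  obtain ⟨p, -, hp⟩ := exists_isPath_of_preconnected_induce hC.preconnected (hC' hu).1 hxC
  obtain ⟨d, hd, hfst, hsnd⟩ := p.exists_boundary_dart C' hu fun hx => (hC' hx).2 hxY
  have hsndC : d.snd ∈ C := hp _ (p.dart_snd_mem_support_of_mem_darts hd)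
  have hsndY : d.snd ∈ Y := by
    by_contra hY
    exact hsnd (hclosed _ hfst _ ⟨hsndC, hY⟩ d.adj)
  exact ⟨C', hC', hobs, d.snd, hsndY, d.fst, hfst, d.adj.symm⟩

end IsObstruction

end Obstruction

section Brush

open SimpleGraph

variable {V : Type*} {G : SimpleGraph V}

/-- A stage in the construction of a brush. The vertex `root` is the next vertex of the ray, which
then follows `spine` to `foot` and enters the obstruction `region`; from `foot`, `twig` leads to a
tooth. -/
structure BrushStage (G : SimpleGraph V) where
  (root foot tooth : V)
  region : Set V
  spine : G.Walk root foot
  twig : G.Walk foot tooth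
  isPath : (spine.append twig).IsPath
  tooth_mem : tooth ∈ Vinf G
  isObstruction : IsObstruction G region
  notMem_region : ∀ v ∈ (spine.append twig).support, v ∉ region
  exists_adj : ∃ y ∈ region, G.Adj foot y

namespace BrushStage

/-- The set of vertices available to the part of the brush that starts at the stage `s`. -/
def territory (s : BrushStage G) : Set V := {v | v ∈ (s.spine.append s.twig).support} ∪ s.region

lemma root_mem_territory (s : BrushStage G) : s.root ∈ s.territory :=
  Or.inl (Walk.start_mem_support _)

lemma exists_root_eq {C : Set V} (hC : IsObstruction G C) {x : V} (hx : x ∈ C) :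
    ∃ s : BrushStage G, s.root = x ∧ s.territory ⊆ C := by
  classical
  obtain ⟨t, htC, ht⟩ := hC.exists_mem_Vinf
  obtain ⟨p, hp, hpC⟩ := exists_isPath_of_preconnected_induce hC.preconnected hx htC
  obtain ⟨C', hC', hobs, q, hq, y, hy, hqy⟩ :=
    hC.exists_subset_sdiff (Y := {v | v ∈ p.support}) p.support.finite_toSet
      ⟨x, p.start_mem_support, hx⟩
  refine ⟨⟨x, q, t, C', p.takeUntil q hq, p.dropUntil q hq, ?_, ht, hobs, ?_, y, hy, hqy⟩, rfl,
    Set.union_subset ?_ (hC'.trans Set.sdiff_subset)⟩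
  all_goals simp only [Walk.take_spec]
  exacts [hp, fun v hv hv' => (hC' hv').2 hv, hpC]

/-- The stage `s'` continues the brush from the stage `s`, one vertex further along the ray. -/
structure IsNext (s s' : BrushStage G) : Prop where
  adj : G.Adj s.root s'.root
  territory_subset : s'.territory ⊆ s.territory \ {s.root}
  territory_subset_region : s.spine.length = 0 → s'.territory ⊆ s.region
  length_lt : s.spine.length ≠ 0 → s'.spine.length < s.spine.length

lemma exists_isNext (s : BrushStage G) : ∃ s', s.IsNext s' := by
  obtain ⟨x, q, t, C, w, p, isPath, ht, hC, hnotMem, y, hy, hqy⟩ := s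
  cases w with
  | nil =>
    obtain ⟨s', rfl, hs'⟩ := exists_root_eq hC hy
    refine ⟨s', hqy, fun v hv => ⟨Or.inr (hs' hv), ?_⟩, fun _ => hs', by simp⟩
    rintro rfl
    exact hnotMem _ (Walk.start_mem_support _) (hs' hv)
  | cons h w =>
    rw [Walk.cons_append, Walk.cons_isPath_iff] at isPath
    simp only [Walk.cons_append, Walk.support_cons, List.forall_mem_cons] at hnotMem
    refine ⟨⟨_, q, t, C, w, p, isPath.1, ht, hC, hnotMem.2, y, hy, hqy⟩, h, ?_, by simp, by simp⟩
    rintro v (hv | hv)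
    · exact ⟨Or.inl (List.mem_cons_of_mem _ hv), ne_of_mem_of_not_mem hv isPath.2⟩
    · exact ⟨Or.inr hv, ne_of_mem_of_not_mem hv hnotMem.1⟩

variable {s : ℕ → BrushStage G} {m n : ℕ}

lemma territory_subset_of_lt (hs : ∀ n, (s n).IsNext (s (n + 1))) (hmn : m < n) :
    (s n).territory ⊆ (s (m + 1)).territory :=
  antitone_nat_of_succ_le (f := fun n => (s n).territory)
    (fun n => (hs n).territory_subset.trans Set.sdiff_subset) hmn

lemma root_notMem_territory (hs : ∀ n, (s n).IsNext (s (n + 1))) (hmn : m < n) :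
    (s m).root ∉ (s n).territory :=
  fun h => ((hs m).territory_subset (territory_subset_of_lt hs hmn h)).2 rfl

lemma injective_root (hs : ∀ n, (s n).IsNext (s (n + 1))) :
    Function.Injective fun n => (s n).root :=
  .of_lt_imp_ne fun _ n hmn h =>
    root_notMem_territory hs hmn (h ▸ (s n).root_mem_territory)

lemma frequently_length_spine_eq_zero (hs : ∀ n, (s n).IsNext (s (n + 1))) :
    ∃ᶠ n in Filter.atTop, (s n).spine.length = 0 := by
  refine Filter.frequently_atTop.2 fun N => ?_
  obtain ⟨n, hn, hmin⟩ :=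
    (measure fun n => (s n).spine.length).wf.has_min (Set.Ici N) Set.nonempty_Ici
  exact ⟨n, hn, by_contra fun h => hmin (n + 1) (Nat.le_succ_of_le hn) ((hs n).length_lt h)⟩

lemma hasCombWithTeethIn (hs : ∀ n, (s n).IsNext (s (n + 1))) :
    HasCombWithTeethIn G (Vinf G) := by
  obtain ⟨k, hk, hk0⟩ :=
    Filter.extraction_of_frequently_atTop (frequently_length_spine_eq_zero hs)
  have htooth_notMem {i n : ℕ} (hi : k i < n) :
      ∀ v ∈ ((s (k i)).spine.append (s (k i)).twig).support, v ∉ (s n).territory := fun v hv hv' =>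
    (s (k i)).notMem_region v hv
      ((hs _).territory_subset_region (hk0 i) (territory_subset_of_lt hs hi hv'))
  refine ⟨fun n => (s n).root, k, fun n => (s (k n)).tooth,
    fun n => (s (k n)).spine.append (s (k n)).twig, injective_root hs, fun n => (hs n).adj, hk,
    fun n => (s (k n)).tooth_mem, fun n => (s (k n)).isPath, ?_, ?_⟩
  · intro i j hij v hi hj
    obtain hlt | hlt := hij.lt_or_gt
    · exact htooth_notMem (hk hlt) v hi (Or.inl hj)
    · exact htooth_notMem (hk hlt) v hj (Or.inl hi)
  · rintro n v hv ⟨i, rfl⟩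
    obtain hlt | rfl | hlt := lt_trichotomy i (k n)
    · exact absurd (Or.inl hv) (root_notMem_territory hs hlt)
    · rfl
    · exact absurd (s i).root_mem_territory (htooth_notMem hlt _ hv)

end BrushStage

lemma extendable_univ (hbrush : ¬HasCombWithTeethIn G (Vinf G)) : Extendable G Set.univ := by
  by_contra h
  obtain ⟨C, -, hC, -⟩ := exists_isObstruction h
  obtain ⟨x, hx⟩ := hC.nonempty
  obtain ⟨s, -, -⟩ := BrushStage.exists_root_eq hC hx
  choose next hnext using BrushStage.exists_isNext (G := G)
  refine hbrush (BrushStage.hasCombWithTeethIn (s := fun n => next^[n] s) fun n => ?_)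
  rw [Function.iterate_succ_apply']
  exact hnext _

end Brush

/-- Every graph containing no brush (a comb all of whose teeth have infinite degree) admits an
unfriendly partition. -/
theorem no_brush_unfriendly {V : Type*} (G : SimpleGraph V)
    (hbrush : ¬ HasCombWithTeethIn G (Vinf G)) :
    ∃ π : V → Bool, Unfriendly G π := by
  obtain ⟨π, -, hπ⟩ := extendable_univ hbrush Set.univ subset_rfl fun _ => false
  exact ⟨π, fun x => hπ.happy (Set.mem_univ x)⟩
end
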